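/- arXiv:1611.09338 — 3 statements merged into one kernel-verified Lean document; each statement's English description precedes it below -/
import Mathlib

section
/- Let a : ℕ → ℂ be a sequence bounded by 1 that admits correlations for Cesàro averages on intervals I = (I_N) with |I_N| → ∞, and suppose the induced Furstenberg system is ergodic (equivalently, the identity lim_{H} 𝔼_{h∈[H]}(𝔼_{m∈I} b(m+h)c(m)) = 𝔼_{m∈I}b(m)·𝔼_{m∈I}c(m) holds for all finite products b, c of shifts of a and conj(a)). Then for every s ≥ 2, ‖a‖_{U^s(I)}^{2^s} = 𝔼_{h∈ℕ^{s-1}} |𝔼_{n∈I} ∏_{ε∈{0,1}^{s-1}} C^{|ε|} a(n + ε·h)|², where C denotes complex conjugation applied |ε| times. -/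
open Filter Finset Topology

/-- `ε · h`. -/
def epsDot {s : ℕ} (ε : Fin s → Bool) (h : Fin s → ℕ) : ℕ := ∑ j, if ε j then h j else 0

/-- The Gowers cube product `∏_{ε∈{0,1}^s} C^{|ε|} a(n + ε·h)`. -/
noncomputable def cubeProd (a : ℕ → ℂ) {s : ℕ} (h : Fin s → ℕ) (n : ℕ) : ℂ :=
  ∏ ε : Fin s → Bool,
    if (Finset.univ.filter fun j => ε j = true).card % 2 = 1 then
      (starRingEnd ℂ) (a (n + epsDot ε h))
    else a (n + epsDot ε h)

/-- Cesàro average of `f` over the interval `I N`. -/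
noncomputable def cesaroAvg (I : ℕ → Finset ℕ) (f : ℕ → ℂ) (N : ℕ) : ℂ :=
  ((I N).card : ℂ)⁻¹ * ∑ n ∈ I N, f n

/-- A finite product of shifts of `a` and `conj a`. -/
noncomputable def prodShift (a : ℕ → ℂ) {k : ℕ} (sh : Fin k → ℕ) (cj : Fin k → Bool)
    (m : ℕ) : ℂ :=
  ∏ j, if cj j then (starRingEnd ℂ) (a (m + sh j)) else a (m + sh j)

/-- a positive finite averaging functional of mass at most one. -/
def IsAvg (A : (ℕ → ℝ) → ℝ) : Prop :=
  ∃ (S : Finset (ℕ × ℕ)) (p : ℕ × ℕ → ℕ) (c : ℝ), 0 ≤ c ∧ c * S.card ≤ 1 ∧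
    ∀ f, A f = c * ∑ x ∈ S, f (p x)

/-- Fejer average. -/
noncomputable def Fe (K : ℕ) (f : ℕ → ℝ) : ℝ :=
  ((K : ℝ) ^ 2)⁻¹ * ∑ x ∈ range K, ∑ y ∈ range K, f (Nat.dist x y)

/-- Uniform average. -/
noncomputable def Av (K : ℕ) (f : ℕ → ℝ) : ℝ :=
  (K : ℝ)⁻¹ * ∑ k ∈ Icc 1 K, f k

/-- iterated averages. -/
noncomputable def Tm (U : ℕ → (ℕ → ℝ) → ℝ) : (s : ℕ) → (Fin s → ℕ) → ((Fin s → ℕ) → ℝ) → ℝ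
  | 0, _, R => R Fin.elim0
  | s + 1, H, R => U (H 0) (fun k => Tm U s (Fin.tail H) (fun l => R (Fin.cons k l)))

lemma isAvg_Fe (K : ℕ) : IsAvg (Fe K) := by
  refine ⟨range K ×ˢ range K, fun x => Nat.dist x.1 x.2, ((K : ℝ) ^ 2)⁻¹, by positivity, ?_, ?_⟩
  · rw [card_product, card_range]; push_cast; rw [← sq]; exact inv_mul_le_one
  · intro f; rw [Fe, sum_product]

lemma isAvg_Av (K : ℕ) : IsAvg (Av K) := by
  refine ⟨Icc 1 K ×ˢ {0}, fun x => x.1, (K : ℝ)⁻¹, by positivity, ?_, ?_⟩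
  · simp; exact inv_mul_le_one
  · intro f; rw [Av, sum_product]; simp

lemma IsAvg.abs_le {A} (hA : IsAvg A) {f : ℕ → ℝ} (hf : ∀ k, |f k| ≤ 1) : |A f| ≤ 1 := by
  obtain ⟨S, p, c, hc, hc1, h⟩ := hA
  rw [h, abs_mul, abs_of_nonneg hc]
  refine le_trans ?_ hc1
  gcongr
  refine (abs_sum_le_sum_abs _ _).trans ((sum_le_sum fun x _ => hf (p x)).trans ?_)
  simp

lemma IsAvg.mono {A} (hA : IsAvg A) {f g : ℕ → ℝ} {e : ℝ} (he : 0 ≤ e)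
    (hf : ∀ k, f k ≤ g k + e) : A f ≤ A g + e := by
  obtain ⟨S, p, c, hc, hc1, h⟩ := hA
  rw [h, h]
  have h1 : ∑ x ∈ S, f (p x) ≤ ∑ x ∈ S, g (p x) + S.card * e := by
    refine (sum_le_sum fun x _ => hf (p x)).trans ?_
    simp [sum_add_distrib]
  have h2 := mul_le_mul_of_nonneg_left h1 hc
  have h3 := mul_le_mul_of_nonneg_right hc1 he
  linarith

lemma Tm_lin {U} (hU : ∀ K, IsAvg (U K)) (S : Finset (ℕ × ℕ)) (c : ℝ) (s : ℕ) :
    ∀ (H : Fin s → ℕ) (g : ℕ × ℕ → (Fin s → ℕ) → ℝ),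
    Tm U s H (fun l => c * ∑ x ∈ S, g x l) = c * ∑ x ∈ S, Tm U s H (g x) := by
  induction s with
  | zero => intro H g; rfl
  | succ s ih =>
    intro H g
    simp only [Tm, ih]
    obtain ⟨S', p, c', -, -, h⟩ := hU (H 0)
    simp only [h, ← mul_sum]
    rw [sum_comm]
    ring

lemma Tm_swap {U} (hU : ∀ K, IsAvg (U K)) {A} (hA : IsAvg A) (s : ℕ)
    (H : Fin s → ℕ) (g : ℕ → (Fin s → ℕ) → ℝ) :
    A (fun k => Tm U s H (g k)) = Tm U s H (fun l => A (fun k => g k l)) := by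
  obtain ⟨S, p, c, -, -, h⟩ := hA
  simp only [h]
  rw [Tm_lin hU S c s H (fun x => g (p x))]

lemma Tm_abs {U} (hU : ∀ K, IsAvg (U K)) (s : ℕ) : ∀ (H : Fin s → ℕ) (R : (Fin s → ℕ) → ℝ)
    (_ : ∀ h, |R h| ≤ 1), |Tm U s H R| ≤ 1 := by
  induction s with
  | zero => intro H R hR; exact hR _
  | succ s ih => intro H R hR; exact (hU _).abs_le fun k => ih _ _ fun l => hR _

lemma Tm_mono {U} (hU : ∀ K, IsAvg (U K)) {e : ℝ} (he : 0 ≤ e) (s : ℕ) :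
    ∀ (H : Fin s → ℕ) (R R' : (Fin s → ℕ) → ℝ)
    (_ : ∀ h, R h ≤ R' h + e), Tm U s H R ≤ Tm U s H R' + e := by
  induction s with
  | zero => intro H R R' hR; exact hR _
  | succ s ih => intro H R R' hR; exact (hU _).mono he fun k => ih _ _ _ fun l => hR _

/-- Divisibility monotonicity in one variable. -/
def Mono1 (r : ℕ → ℝ) : Prop := ∀ m K : ℕ, 0 < m → 0 < K → Fe (m * K) r ≤ Fe K r

/-- Divisibility monotonicity in each variable separately. -/
def SMono : (s : ℕ) → ((Fin s → ℕ) → ℝ) → Prop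
  | 0, _ => True
  | s + 1, R => (∀ l, Mono1 (fun k => R (Fin.cons k l))) ∧
      ∀ k, SMono s (fun l => R (Fin.cons k l))

lemma Mono1.tm {s : ℕ} {R : ℕ → (Fin s → ℕ) → ℝ} (h : ∀ l, Mono1 (fun k => R k l))
    (H : Fin s → ℕ) : Mono1 (fun k => Tm Fe s H (R k)) := by
  intro m K hm hK
  rw [Tm_swap isAvg_Fe (isAvg_Fe _), Tm_swap isAvg_Fe (isAvg_Fe _)]
  have := Tm_mono isAvg_Fe le_rfl s H _ _ (fun l => (h l m K hm hK).trans (le_add_of_nonneg_right le_rfl))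
  rwa [add_zero] at this

lemma S_diff (f : ℕ → ℝ) (hf : ∀ k, |f k| ≤ 1) (M K : ℕ) (h : M ≤ K) :
    |∑ x ∈ range K, ∑ y ∈ range K, f (Nat.dist x y) -
      ∑ x ∈ range M, ∑ y ∈ range M, f (Nat.dist x y)| ≤ (K : ℝ) ^ 2 - (M : ℝ) ^ 2 := by
  rw [← sum_product', ← sum_product']
  have hs : range M ×ˢ range M ⊆ range K ×ˢ range K :=
    product_subset_product (range_mono h) (range_mono h)
  rw [← sum_sdiff hs, add_sub_cancel_right]
  refine (abs_sum_le_sum_abs _ _).trans ((sum_le_sum fun x _ => hf _).trans ?_)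
  rw [sum_const, card_sdiff_of_subset hs, nsmul_eq_mul, Nat.cast_sub (card_le_card hs)]
  simp [sq]

lemma Mono1.approx {r : ℕ → ℝ} (h : Mono1 r) (hr : ∀ k, |r k| ≤ 1) {K K' : ℕ} (hK : 0 < K)
    (hK' : 0 < K') : Fe K' r ≤ Fe K r + 4 * K / K' := by
  have b1 := abs_le.1 ((isAvg_Fe K').abs_le hr)
  have b2 := abs_le.1 ((isAvg_Fe K).abs_le hr)
  have p1 : (0 : ℝ) < K := by exact_mod_cast hK
  have p2 : (0 : ℝ) < K' := by exact_mod_cast hK'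
  rcases lt_or_ge K' K with hlt | hge
  · have : (4 : ℝ) ≤ 4 * K / K' := by
      rw [le_div_iff₀ p2]
      have : (K' : ℝ) ≤ K := by exact_mod_cast hlt.le
      linarith
    linarith
  · set m := K' / K with hm
    have hm0 : 0 < m := Nat.div_pos hge hK
    have hmK : m * K ≤ K' := Nat.div_mul_le_self _ _
    have hmK2 : K' < m * K + K := by
      have := Nat.lt_div_mul_add hK (a := K'); exact this
    have h1 := h m K hm0 hK
    have h2 := S_diff r hr (m * K) K' hmK
    have b3 := abs_le.1 ((isAvg_Fe (m * K)).abs_le hr)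
    have e1 : ∑ x ∈ range K', ∑ y ∈ range K', r (Nat.dist x y) = (K' : ℝ) ^ 2 * Fe K' r := by
      rw [Fe]; field_simp
    have p3 : (0 : ℝ) < ((m * K : ℕ) : ℝ) := by exact_mod_cast Nat.mul_pos hm0 hK
    have e2 : ∑ x ∈ range (m * K), ∑ y ∈ range (m * K), r (Nat.dist x y)
        = ((m * K : ℕ) : ℝ) ^ 2 * Fe (m * K) r := by
      rw [Fe]; field_simp
    rw [e1, e2] at h2
    have q1 : ((m * K : ℕ) : ℝ) ≤ K' := by exact_mod_cast hmK
    have q2 : (K' : ℝ) ≤ ((m * K : ℕ) : ℝ) + K := by exact_mod_cast hmK2.le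
    generalize ((m * K : ℕ) : ℝ) = q at *
    have h3 := (abs_le.1 h2).2
    have key : Fe K' r ≤ Fe (m * K) r + 4 * K / K' := by
      rw [← sub_le_iff_le_add', le_div_iff₀ p2]
      have : (K' : ℝ) * ((Fe K' r - Fe (m * K) r) * K') ≤ K' * (4 * K) := by
        have : (K' : ℝ) ^ 2 * Fe K' r - K' ^ 2 * Fe (m * K) r ≤ 2 * (K' ^ 2 - q ^ 2) := by
          have : (0 : ℝ) ≤ K' ^ 2 - q ^ 2 := by nlinarith
          nlinarith
        nlinarith
      exact le_of_mul_le_mul_left this p2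
    linarith

lemma P_approx (B K0 : ℕ) (hK0 : 0 < K0) (s : ℕ) : ∀ (H H' : Fin s → ℕ) (R : (Fin s → ℕ) → ℝ)
    (_ : ∀ h, |R h| ≤ 1) (_ : SMono s R) (_ : ∀ i, 0 < H i) (_ : ∀ i, H i ≤ B)
    (_ : ∀ i, K0 ≤ H' i), Tm Fe s H' R ≤ Tm Fe s H R + s * (4 * B / K0) := by
  induction s with
  | zero => intro H H' R _ _ _ _ _; simp [Tm]
  | succ s ih =>
    intro H H' R hR hS h0 hB hK
    have h1 : Tm Fe (s + 1) H' R ≤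
        Fe (H 0) (fun k => Tm Fe s (Fin.tail H') (fun l => R (Fin.cons k l))) +
          4 * (H 0 : ℝ) / (H' 0 : ℝ) :=
      (Mono1.tm (R := fun k l => R (Fin.cons k l)) hS.1 (Fin.tail H')).approx
        (fun k => Tm_abs isAvg_Fe _ _ _ fun l => hR _) (h0 0) (lt_of_lt_of_le hK0 (hK 0))
    have h2 : Fe (H 0) (fun k => Tm Fe s (Fin.tail H') (fun l => R (Fin.cons k l))) ≤
        Tm Fe (s + 1) H R + s * (4 * B / K0) :=
      (isAvg_Fe _).mono (by positivity) fun k =>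
        ih _ _ _ (fun l => hR _) (hS.2 k) (fun i => h0 _) (fun i => hB _) (fun i => hK _)
    have h3 : 4 * (H 0 : ℝ) / (H' 0 : ℝ) ≤ 4 * B / K0 := by
      have a1 : (H 0 : ℝ) ≤ B := by exact_mod_cast hB 0
      have a2 : (K0 : ℝ) ≤ H' 0 := by exact_mod_cast hK 0
      have a3 : (0 : ℝ) < K0 := by exact_mod_cast hK0
      gcongr
    push_cast
    linarith

lemma P_lim (s : ℕ) (R : (Fin s → ℕ) → ℝ) (hR : ∀ h, |R h| ≤ 1) (hS : SMono s R) :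
    ∃ L : ℝ, |L| ≤ 1 ∧ ∀ δ > 0, ∃ K0 : ℕ, ∀ H : Fin s → ℕ, (∀ i, K0 ≤ H i) →
      |Tm Fe s H R - L| ≤ δ := by
  set X : Set ℝ := {x | ∃ H : Fin s → ℕ, (∀ i, 0 < H i) ∧ x = Tm Fe s H R} with hX
  have hb : ∀ x ∈ X, -1 ≤ x ∧ x ≤ 1 := by
    rintro x ⟨H, -, rfl⟩
    exact abs_le.1 (Tm_abs isAvg_Fe s H R hR)
  have hne : X.Nonempty := ⟨_, fun _ => 1, fun _ => one_pos, rfl⟩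
  have hbdd : BddBelow X := ⟨-1, fun x hx => (hb x hx).1⟩
  refine ⟨sInf X, abs_le.2 ⟨le_csInf hne fun x hx => (hb x hx).1, ?_⟩, ?_⟩
  · obtain ⟨x, hx⟩ := hne
    exact (csInf_le hbdd hx).trans (hb x hx).2
  · intro δ hδ
    obtain ⟨x, ⟨H, hH, rfl⟩, hx⟩ := exists_lt_of_csInf_lt hne
      (show sInf X < sInf X + δ / 2 by linarith)
    set B := ∑ i, H i with hB
    obtain ⟨K1, hK1⟩ := exists_nat_ge ((s * (4 * B) : ℝ) / (δ / 2))
    refine ⟨K1 + 1, fun H' hH' => ?_⟩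
    have h1 := P_approx B (K1 + 1) (Nat.succ_pos _) s H H' R hR hS hH
      (fun i => single_le_sum (f := H) (fun _ _ => Nat.zero_le _) (mem_univ i)) hH'
    have h2 : sInf X ≤ Tm Fe s H' R :=
      csInf_le hbdd ⟨H', fun i => lt_of_lt_of_le (Nat.succ_pos _) (hH' i), rfl⟩
    have h3 : (s : ℝ) * (4 * B / ((K1 + 1 : ℕ) : ℝ)) ≤ δ / 2 := by
      rw [← mul_div_assoc, div_le_iff₀ (by positivity)]
      rw [div_le_iff₀ (by positivity)] at hK1
      push_cast
      nlinarith
    rw [abs_le]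
    constructor <;> linarith

lemma S_succ (b : ℕ → ℝ) (K : ℕ) :
    ∑ x ∈ range (K + 1), ∑ y ∈ range (K + 1), b (Nat.dist x y) =
      ∑ x ∈ range K, ∑ y ∈ range K, b (Nat.dist x y) + (b 0 + 2 * ∑ k ∈ Icc 1 K, b k) := by
  have h1 : ∑ x ∈ range K, b (Nat.dist x K) = ∑ k ∈ Icc 1 K, b k := by
    refine sum_nbij' (fun x => K - x) (fun x => K - x) ?_ ?_ ?_ ?_ ?_ <;>
      simp only [mem_range, mem_Icc] <;> intro x hx
    · omega
    · omega
    · omega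
    · omega
    · congr 1; simp only [Nat.dist]; omega
  have h2 : ∑ x ∈ range K, b (Nat.dist K x) = ∑ k ∈ Icc 1 K, b k := by
    rw [← h1]; exact sum_congr rfl fun x _ => by rw [Nat.dist_comm]
  rw [sum_range_succ, sum_range_succ, h2]
  simp only [sum_range_succ, sum_add_distrib]
  rw [h1, Nat.dist_self]
  ring

lemma S_add (b : ℕ → ℝ) (hb : ∀ k, |b k| ≤ 1) (K J : ℕ) :
    |∑ x ∈ range (K + J), ∑ y ∈ range (K + J), b (Nat.dist x y) -
      ∑ x ∈ range K, ∑ y ∈ range K, b (Nat.dist x y) - 2 * J * ∑ k ∈ Icc 1 K, b k|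
      ≤ J + 2 * (J : ℝ) ^ 2 := by
  have hs : ∀ J : ℕ, |∑ k ∈ Icc 1 (K + J), b k - ∑ k ∈ Icc 1 K, b k| ≤ J := by
    intro J
    induction J with
    | zero => simp
    | succ J ih =>
      rw [← add_assoc, sum_Icc_succ_top (by omega)]
      have := hb (K + J + 1)
      rw [abs_le] at *
      push_cast
      constructor <;> linarith
  induction J with
  | zero => simp
  | succ J ih =>
    rw [← add_assoc, S_succ]
    have h1 := hs J
    have h2 := hb 0
    rw [abs_le] at *
    push_cast
    constructor <;> nlinarith

lemma tauber1 (ε : ℝ) (hε : 0 < ε) (hε1 : ε ≤ 1) (L : ℝ) (hL : |L| ≤ 1) :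
    ∃ δ > 0, ∃ K1 : ℕ, ∀ K0 : ℕ, ∀ b : ℕ → ℝ, (∀ k, |b k| ≤ 1) →
      (∀ K, K0 ≤ K → |Fe K b - L| ≤ δ) → ∀ K, K0 ≤ K → K1 ≤ K → |Av K b - L| ≤ ε := by
  set η := ε / 7 with hη
  have hη0 : 0 < η := by positivity
  obtain ⟨K1, hK1⟩ := exists_nat_ge (1 / η)
  refine ⟨ε * η / 5, by positivity, K1 + 1, fun K0 b hb hF K hK hKK => ?_⟩
  have hKp : (0 : ℝ) < K := by exact_mod_cast (by omega : 0 < K)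
  have hK1' : 1 ≤ η * K := by
    have : (K1 : ℝ) ≤ K := by exact_mod_cast (by omega : K1 ≤ K)
    rw [div_le_iff₀ hη0] at hK1
    nlinarith
  set J := ⌈η * K⌉₊ with hJ
  have hJ1 : η * K ≤ J := Nat.le_ceil _
  have hJ2 : (J : ℝ) < η * K + 1 := Nat.ceil_lt_add_one (by positivity)
  have hJ3 : (J : ℝ) ≤ 2 * η * K := by linarith
  have hJ4 : (J : ℝ) ≤ K := by nlinarith
  have hJp : (0 : ℝ) < J := by linarith
  have h1 := hF K hK
  have h2 := hF (K + J) (by omega)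
  have h3 := S_add b hb K J
  have e1 : ∑ x ∈ range K, ∑ y ∈ range K, b (Nat.dist x y) = (K : ℝ) ^ 2 * Fe K b := by
    rw [Fe]; field_simp
  have e2 : ∑ x ∈ range (K + J), ∑ y ∈ range (K + J), b (Nat.dist x y)
      = ((K : ℝ) + J) ^ 2 * Fe (K + J) b := by
    rw [Fe]; push_cast; field_simp
  have e3 : ∑ k ∈ Icc 1 K, b k = K * Av K b := by
    rw [Av]; field_simp
  rw [e1, e2, e3] at h3
  generalize Fe K b = F1 at *
  generalize Fe (K + J) b = F2 at *
  generalize Av K b = A at *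
  generalize (K : ℝ) = k at *
  generalize (J : ℝ) = j at *
  set δ := ε * η / 5 with hδ
  have hδ0 : 0 < δ := by positivity
  have m1 : |k ^ 2 * F1 - k ^ 2 * L| ≤ k ^ 2 * δ := by
    rw [← mul_sub, abs_mul, abs_of_nonneg (sq_nonneg k)]; gcongr
  have m2 : |(k + j) ^ 2 * F2 - (k + j) ^ 2 * L| ≤ 4 * k ^ 2 * δ := by
    rw [← mul_sub, abs_mul, abs_of_nonneg (sq_nonneg (k + j))]
    have : (k + j) ^ 2 ≤ 4 * k ^ 2 := by nlinarith
    gcongr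
  have m3 : |j ^ 2 * L| ≤ j ^ 2 := by
    rw [abs_mul, abs_of_nonneg (sq_nonneg j)]; nlinarith [sq_nonneg j]
  have m4 : |2 * j * k * (A - L)| ≤ j + 3 * j ^ 2 + 5 * k ^ 2 * δ := by
    clear h1 h2 hF hb e1 e2 e3
    rw [abs_le] at *
    constructor <;> linarith
  rw [abs_mul, abs_of_pos (by positivity)] at m4
  -- bound the right side
  have n1 : j ≤ j * (η * k) := by nlinarith
  have n2 : 3 * j ^ 2 ≤ 6 * η * (j * k) := by nlinarith
  have n3 : 5 * k ^ 2 * δ ≤ ε * (j * k) := by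
    have : 5 * k ^ 2 * δ = ε * (η * k) * k := by rw [hδ]; ring
    rw [this]
    nlinarith [mul_le_mul_of_nonneg_left hJ1 (by positivity : 0 ≤ ε * k)]
  have n4 : 2 * j * k * |A - L| ≤ 2 * j * k * ε := by
    have : η * 7 = ε := by rw [hη]; ring
    have : j * (η * k) + 6 * η * (j * k) = ε * (j * k) := by rw [← this]; ring
    nlinarith
  exact le_of_mul_le_mul_left n4 (by positivity)

lemma tauber (L : ℝ) (hL : |L| ≤ 1) (s : ℕ) : ∀ ε : ℝ, 0 < ε → ε ≤ 1 →
    ∃ δ > 0, ∃ K1 : ℕ, ∀ K0 : ℕ, ∀ R : (Fin s → ℕ) → ℝ, (∀ h, |R h| ≤ 1) →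
      (∀ H, (∀ i, K0 ≤ H i) → |Tm Fe s H R - L| ≤ δ) →
      ∀ H, (∀ i, K0 ≤ H i) → (∀ i, K1 ≤ H i) → |Tm Av s H R - L| ≤ ε := by
  induction s with
  | zero =>
    intro ε hε _
    refine ⟨ε, hε, 0, fun K0 R hR h H h1 _ => h H h1⟩
  | succ s ih =>
    intro ε hε hε1
    obtain ⟨δ1, hδ1, K1, h1⟩ := tauber1 ε hε hε1 L hL
    obtain ⟨δ2, hδ2, K2, h2⟩ := ih (min δ1 1) (by positivity) (min_le_right _ _)
    refine ⟨δ2, hδ2, max K1 K2, fun K0 R hR hP H hH0 hH1 => ?_⟩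
    refine h1 K0 (fun k => Tm Av s (Fin.tail H) (fun l => R (Fin.cons k l)))
      (fun k => Tm_abs isAvg_Av _ _ _ fun l => hR _) ?_ (H 0) (hH0 0)
      ((le_max_left _ _).trans (hH1 0))
    intro K hK
    rw [Tm_swap isAvg_Av (isAvg_Fe K)]
    refine (h2 K0 _ (fun l => (isAvg_Fe K).abs_le fun k => hR _) ?_ (Fin.tail H)
      (fun i => hH0 _) (fun i => (le_max_right _ _).trans (hH1 _))).trans (min_le_left _ _)
    intro H' hH'
    rw [← Tm_swap isAvg_Fe (isAvg_Fe K)]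
    have := hP (Fin.cons K H') (fun i => by
      refine Fin.cases ?_ (fun i => ?_) i
      · simpa using hK
      · simpa using hH' i)
    simpa [Tm] using this

lemma M_lim (s : ℕ) (R : (Fin s → ℕ) → ℝ) (hR : ∀ h, |R h| ≤ 1) (hS : SMono s R) :
    ∃ L : ℝ, ∀ ε > 0, ∃ K0 : ℕ, ∀ H : Fin s → ℕ, (∀ i, K0 ≤ H i) →
      |Tm Av s H R - L| ≤ ε := by
  obtain ⟨L, hL, h⟩ := P_lim s R hR hS
  refine ⟨L, fun ε hε => ?_⟩
  obtain ⟨δ, hδ, K1, h1⟩ := tauber L hL s (min ε 1) (by positivity) (min_le_right _ _)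
  obtain ⟨K0, h0⟩ := h δ hδ
  exact ⟨max K0 K1, fun H hH => (h1 K0 R hR h0 H (fun i => (le_max_left _ _).trans (hH i))
    (fun i => (le_max_right _ _).trans (hH i))).trans (min_le_left _ _)⟩

lemma sum_pi_cons {M : Type*} [AddCommMonoid M] (s : ℕ) (S : Finset ℕ)
    (R : (Fin (s + 1) → ℕ) → M) :
    ∑ h ∈ Fintype.piFinset (fun _ : Fin (s + 1) => S), R h =
      ∑ k ∈ S, ∑ l ∈ Fintype.piFinset (fun _ : Fin s => S), R (Fin.cons k l) := by
  rw [← sum_product']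
  refine sum_nbij' (fun h => (h 0, Fin.tail h)) (fun x => Fin.cons x.1 x.2) ?_ ?_ ?_ ?_ ?_
  · intro h hh
    simp only [Fintype.mem_piFinset, mem_product] at *
    exact ⟨hh 0, fun i => hh _⟩
  · intro x hx
    simp only [Fintype.mem_piFinset, mem_product] at *
    exact fun i => Fin.cases (by simpa using hx.1) (fun i => by simpa using hx.2 i) i
  · intro h _; simp
  · intro x _; simp
  · intro h _; simp

lemma Tm_Av_const (H s : ℕ) : ∀ (R : (Fin s → ℕ) → ℝ), Tm Av s (fun _ => H) R =
    ((H : ℝ) ^ s)⁻¹ * ∑ h ∈ Fintype.piFinset (fun _ : Fin s => Icc 1 H), R h := by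
  induction s with
  | zero =>
    intro R
    simp [Tm]
    exact congrArg R (Subsingleton.elim _ _)
  | succ s ih =>
    intro R
    have : Fin.tail (fun _ : Fin (s + 1) => H) = fun _ => H := rfl
    simp only [Tm, this, ih]
    rw [sum_pi_cons, Av, ← mul_sum, pow_succ, mul_inv]
    ring
lemma cube_cons (a : ℕ → ℂ) {s : ℕ} (k : ℕ) (h : Fin s → ℕ) (n : ℕ) :
    cubeProd a (Fin.cons k h : Fin (s + 1) → ℕ) n =
      cubeProd a h n * (starRingEnd ℂ) (cubeProd a h (n + k)) := by
  unfold cubeProd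
  rw [← (Fin.consEquiv (fun _ => Bool)).prod_comp, Fintype.prod_prod_type, Fintype.prod_bool,
    mul_comm, map_prod]
  congr 1
  · refine prod_congr rfl fun ε _ => ?_
    have h1 : epsDot ((Fin.consEquiv (fun _ => Bool)) (false, ε)) (Fin.cons k h : Fin (s + 1) → ℕ) = epsDot ε h := by
      simp [epsDot, Fin.sum_univ_succ, Fin.consEquiv]
    have h2 : (univ.filter fun j : Fin (s + 1) => (Fin.consEquiv (fun _ => Bool)) (false, ε) j = true).card
        = (univ.filter fun j => ε j = true).card := by
      rw [Fin.card_filter_univ_succ]; simp [Fin.consEquiv, add_comm]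
    rw [h1, h2]
  · refine prod_congr rfl fun ε _ => ?_
    have h1 : epsDot ((Fin.consEquiv (fun _ => Bool)) (true, ε)) (Fin.cons k h : Fin (s + 1) → ℕ) = k + epsDot ε h := by
      simp [epsDot, Fin.sum_univ_succ, Fin.consEquiv]
    have h2 : (univ.filter fun j : Fin (s + 1) => (Fin.consEquiv (fun _ => Bool)) (true, ε) j = true).card
        = (univ.filter fun j => ε j = true).card + 1 := by
      rw [Fin.card_filter_univ_succ]; simp [Fin.consEquiv, add_comm]
    rw [h1, h2, ← add_assoc]
    split_ifs with h3 h4 h4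
    · omega
    · rfl
    · simp
    · omega

lemma cube_deriv (a : ℕ → ℂ) {s : ℕ} (k : ℕ) (h : Fin s → ℕ) (n : ℕ) :
    cubeProd a (Fin.cons k h : Fin (s + 1) → ℕ) n =
      cubeProd (fun n => a n * (starRingEnd ℂ) (a (n + k))) h n := by
  rw [cube_cons]
  unfold cubeProd
  rw [map_prod, ← prod_mul_distrib]
  refine prod_congr rfl fun ε _ => ?_
  have : n + k + epsDot ε h = n + epsDot ε h + k := by omega
  split_ifs <;> simp [this]

lemma cube_norm (a : ℕ → ℂ) (ha : ∀ n, ‖a n‖ ≤ 1) {s : ℕ} (h : Fin s → ℕ) (n : ℕ) :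
    ‖cubeProd a h n‖ ≤ 1 := by
  unfold cubeProd
  rw [norm_prod]
  refine prod_le_one (fun _ _ => norm_nonneg _) fun ε _ => ?_
  split_ifs
  · rw [RCLike.norm_conj]; exact ha _
  · exact ha _

lemma ces_norm (I : ℕ → Finset ℕ) (g : ℕ → ℂ) (hg : ∀ n, ‖g n‖ ≤ 1) (N : ℕ) :
    ‖cesaroAvg I g N‖ ≤ 1 := by
  unfold cesaroAvg
  rw [norm_mul, norm_inv, Complex.norm_natCast]
  have : ‖∑ n ∈ I N, g n‖ ≤ (I N).card :=
    (norm_sum_le _ _).trans ((sum_le_sum fun n _ => hg n).trans (by simp))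
  exact (mul_le_mul_of_nonneg_left this (by positivity)).trans inv_mul_le_one

lemma Icc_tele (g : ℕ → ℂ) (l m : ℕ) (h : l ≤ m) :
    ∑ n ∈ Icc l m, g (n + 1) = ∑ n ∈ Icc l m, g n + g (m + 1) - g l := by
  induction m, h using Nat.le_induction with
  | base => simp
  | succ m hm ih =>
    rw [sum_Icc_succ_top (by omega), sum_Icc_succ_top (by omega), ih]; ring

lemma ces_shift1 {lo hi : ℕ → ℕ} {I : ℕ → Finset ℕ}
    (hI : ∀ N, I N = Finset.Icc (lo N) (hi N))
    (hIcard : Tendsto (fun N => (I N).card) atTop atTop)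
    (g : ℕ → ℂ) (hg : ∀ n, ‖g n‖ ≤ 1) (L : ℂ)
    (h : Tendsto (cesaroAvg I g) atTop (𝓝 L)) :
    Tendsto (cesaroAvg I (fun n => g (n + 1))) atTop (𝓝 L) := by
  have h0 : Tendsto (fun N => cesaroAvg I (fun n => g (n + 1)) N - cesaroAvg I g N)
      atTop (𝓝 0) := by
    have hz : Tendsto (fun N => (((I N).card : ℝ))⁻¹ * 2) atTop (𝓝 0) := by
      have := (tendsto_inv_atTop_zero.comp
        (tendsto_natCast_atTop_atTop (R := ℝ) |>.comp hIcard)).mul_const 2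
      simpa using this
    refine squeeze_zero_norm (fun N => ?_) hz
    unfold cesaroAvg
    rw [← mul_sub, norm_mul, norm_inv, Complex.norm_natCast]
    refine mul_le_mul_of_nonneg_left ?_ (by positivity)
    rw [hI N]
    rcases le_or_gt (lo N) (hi N) with hl | hl
    · rw [Icc_tele g _ _ hl]
      have e : ∀ x y z : ℂ, x + y - z - x = y - z := by intros; ring
      rw [e]
      refine (norm_sub_le _ _).trans ?_
      linarith [hg (hi N + 1), hg (lo N)]
    · rw [Icc_eq_empty (by omega)]; simp
  have := h0.add h
  simpa using this

lemma ces_shift {lo hi : ℕ → ℕ} {I : ℕ → Finset ℕ}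
    (hI : ∀ N, I N = Finset.Icc (lo N) (hi N))
    (hIcard : Tendsto (fun N => (I N).card) atTop atTop)
    (g : ℕ → ℂ) (hg : ∀ n, ‖g n‖ ≤ 1) (L : ℂ)
    (h : Tendsto (cesaroAvg I g) atTop (𝓝 L)) (k : ℕ) :
    Tendsto (cesaroAvg I (fun n => g (n + k))) atTop (𝓝 L) := by
  induction k with
  | zero => simpa using h
  | succ k ih =>
    have := ces_shift1 hI hIcard (fun n => g (n + k)) (fun n => hg _) L ih
    refine this.congr fun N => ?_
    unfold cesaroAvg
    congr 1
    exact sum_congr rfl fun n _ => by ring_nf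

lemma corr_xy {lo hi : ℕ → ℕ} {I : ℕ → Finset ℕ}
    (hI : ∀ N, I N = Finset.Icc (lo N) (hi N))
    (hIcard : Tendsto (fun N => (I N).card) atTop atTop)
    (F : ℕ → ℂ) (hF : ∀ n, ‖F n‖ ≤ 1) (γ : ℕ → ℂ)
    (h : ∀ k, Tendsto (cesaroAvg I (fun n => F n * (starRingEnd ℂ) (F (n + k)))) atTop (𝓝 (γ k)))
    (x y : ℕ) :
    Tendsto (fun N => (cesaroAvg I (fun n => F (n + x) * (starRingEnd ℂ) (F (n + y))) N).re)
      atTop (𝓝 (γ (Nat.dist x y)).re) := by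
  have hb : ∀ k n, ‖F n * (starRingEnd ℂ) (F (n + k))‖ ≤ 1 := fun k n => by
    rw [norm_mul, RCLike.norm_conj]
    exact mul_le_one₀ (hF _) (norm_nonneg _) (hF _)
  have key : ∀ x k, Tendsto (fun N => (cesaroAvg I
      (fun n => F (n + x) * (starRingEnd ℂ) (F (n + (x + k)))) N).re) atTop (𝓝 (γ k).re) := by
    intro x k
    have h1 := ces_shift hI hIcard _ (hb k) _ (h k) x
    refine ((Complex.continuous_re.tendsto _).comp h1).congr fun N => ?_
    simp only [Function.comp, add_assoc]
  rcases le_total x y with hxy | hxy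
  · obtain ⟨k, rfl⟩ := Nat.exists_eq_add_of_le hxy
    have : Nat.dist x (x + k) = k := by simp [Nat.dist]
    rw [this]; exact key x k
  · obtain ⟨k, rfl⟩ := Nat.exists_eq_add_of_le hxy
    have : Nat.dist (y + k) y = k := by simp [Nat.dist]
    rw [this]
    refine (key y k).congr fun N => ?_
    rw [← Complex.conj_re]
    congr 1
    unfold cesaroAvg
    rw [map_mul, map_sum, map_inv₀, Complex.conj_natCast]
    congr 1
    refine sum_congr rfl fun n _ => ?_
    rw [map_mul, Complex.conj_conj, mul_comm]

lemma normsq_expand (F : ℕ → ℂ) (K t n : ℕ) :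
    ‖∑ x ∈ range K, F (n + (t + x))‖ ^ 2 =
      ∑ x ∈ range K, ∑ y ∈ range K, (F (n + (t + x)) * (starRingEnd ℂ) (F (n + (t + y)))).re := by
  have : ((‖∑ x ∈ range K, F (n + (t + x))‖ ^ 2 : ℝ) : ℂ) =
      (∑ x ∈ range K, F (n + (t + x))) * (starRingEnd ℂ) (∑ x ∈ range K, F (n + (t + x))) := by
    rw [Complex.mul_conj, Complex.normSq_eq_norm_sq]
  rw [map_sum, sum_mul_sum] at this
  have h2 := congrArg Complex.re this
  rw [Complex.ofReal_re] at h2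
  rw [h2, Complex.re_sum]
  exact sum_congr rfl fun x _ => Complex.re_sum _ _

lemma sq_lim {lo hi : ℕ → ℕ} {I : ℕ → Finset ℕ}
    (hI : ∀ N, I N = Finset.Icc (lo N) (hi N))
    (hIcard : Tendsto (fun N => (I N).card) atTop atTop)
    (F : ℕ → ℂ) (hF : ∀ n, ‖F n‖ ≤ 1) (γ : ℕ → ℂ)
    (h : ∀ k, Tendsto (cesaroAvg I (fun n => F n * (starRingEnd ℂ) (F (n + k)))) atTop (𝓝 (γ k)))
    (K t : ℕ) :
    Tendsto (fun N => ((I N).card : ℝ)⁻¹ * ∑ n ∈ I N, ‖∑ x ∈ range K, F (n + (t + x))‖ ^ 2)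
      atTop (𝓝 (∑ x ∈ range K, ∑ y ∈ range K, (γ (Nat.dist x y)).re)) := by
  have h1 : Tendsto (fun N => ∑ x ∈ range K, ∑ y ∈ range K,
      (cesaroAvg I (fun n => F (n + (t + x)) * (starRingEnd ℂ) (F (n + (t + y)))) N).re) atTop
      (𝓝 (∑ x ∈ range K, ∑ y ∈ range K, (γ (Nat.dist x y)).re)) := by
    refine tendsto_finsetSum _ fun x _ => tendsto_finsetSum _ fun y _ => ?_
    have := corr_xy hI hIcard F hF γ h (t + x) (t + y)
    rwa [Nat.dist_add_add_left] at this
  refine h1.congr fun N => ?_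
  simp only [normsq_expand]
  rw [sum_comm (s := I N), mul_sum]
  refine sum_congr rfl fun x _ => ?_
  rw [sum_comm (s := I N), mul_sum]
  refine sum_congr rfl fun y _ => ?_
  unfold cesaroAvg
  have : (((I N).card : ℂ))⁻¹ = ((((I N).card : ℝ)⁻¹ : ℝ) : ℂ) := by push_cast; rfl
  rw [this, Complex.re_ofReal_mul, Complex.re_sum]

lemma block_sum (f : ℕ → ℂ) (m K : ℕ) :
    ∑ x ∈ range (m * K), f x = ∑ j ∈ range m, ∑ x ∈ range K, f (j * K + x) := by
  induction m with
  | zero => simp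
  | succ m ih => rw [Nat.succ_mul, sum_range_add, ih, sum_range_succ]

lemma block_ineq (f : ℕ → ℂ) (m K : ℕ) :
    ‖∑ x ∈ range (m * K), f x‖ ^ 2 ≤
      m * ∑ j ∈ range m, ‖∑ x ∈ range K, f (j * K + x)‖ ^ 2 := by
  rw [block_sum]
  have h1 := norm_sum_le (range m) (fun j => ∑ x ∈ range K, f (j * K + x))
  have h2 := sq_sum_le_card_mul_sum_sq (s := range m)
    (f := fun j => ‖∑ x ∈ range K, f (j * K + x)‖)
  rw [card_range] at h2
  exact (pow_le_pow_left₀ (norm_nonneg _) h1 2).trans h2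

lemma mono1_corr {lo hi : ℕ → ℕ} {I : ℕ → Finset ℕ}
    (hI : ∀ N, I N = Finset.Icc (lo N) (hi N))
    (hIcard : Tendsto (fun N => (I N).card) atTop atTop)
    (F : ℕ → ℂ) (hF : ∀ n, ‖F n‖ ≤ 1) (γ : ℕ → ℂ)
    (h : ∀ k, Tendsto (cesaroAvg I (fun n => F n * (starRingEnd ℂ) (F (n + k)))) atTop (𝓝 (γ k))) :
    Mono1 (fun k => (γ k).re) := by
  intro m K hm hK
  have h1 := sq_lim hI hIcard F hF γ h (m * K) 0
  have h2 : Tendsto (fun N => (m : ℝ) * ∑ j ∈ range m,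
      (((I N).card : ℝ)⁻¹ * ∑ n ∈ I N, ‖∑ x ∈ range K, F (n + (j * K + x))‖ ^ 2)) atTop
      (𝓝 (m * ∑ j ∈ range m, ∑ x ∈ range K, ∑ y ∈ range K, (γ (Nat.dist x y)).re)) :=
    (tendsto_finsetSum _ fun j _ => sq_lim hI hIcard F hF γ h K (j * K)).const_mul _
  have h3 := le_of_tendsto_of_tendsto' h1 h2 (fun N => by
    rw [← mul_sum, sum_comm (s := range m) (t := I N), mul_left_comm]
    refine mul_le_mul_of_nonneg_left ?_ (by positivity)
    rw [mul_sum]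
    refine sum_le_sum fun n _ => ?_
    have := block_ineq (fun x => F (n + x)) m K
    simpa using this)
  rw [sum_const, card_range, nsmul_eq_mul, ← mul_assoc] at h3
  have p1 : (0 : ℝ) < K := by exact_mod_cast hK
  have p2 : (0 : ℝ) < m := by exact_mod_cast hm
  unfold Fe
  push_cast
  rw [inv_mul_le_iff₀ (by positivity)]
  refine h3.trans (le_of_eq ?_)
  field_simp

lemma smono_cube {lo hi : ℕ → ℕ} {I : ℕ → Finset ℕ}
    (hI : ∀ N, I N = Finset.Icc (lo N) (hi N))
    (hIcard : Tendsto (fun N => (I N).card) atTop atTop)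
    (s : ℕ) : ∀ (a : ℕ → ℂ) (_ : ∀ n, ‖a n‖ ≤ 1) (c : (Fin s → ℕ) → ℂ)
    (_ : ∀ h : Fin s → ℕ, Tendsto (cesaroAvg I (cubeProd a h)) atTop (𝓝 (c h))),
    SMono s (fun h => (c h).re) := by
  induction s with
  | zero => intro a _ c _; trivial
  | succ s ih =>
    intro a ha c hc
    refine ⟨fun l => ?_, fun k => ?_⟩
    · refine mono1_corr hI hIcard (cubeProd a l) (cube_norm a ha l)
        (fun k => c (Fin.cons k l)) fun k => ?_
      refine (hc (Fin.cons k l)).congr fun N => ?_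
      unfold cesaroAvg
      simp only [cube_cons]
    · refine ih (fun n => a n * (starRingEnd ℂ) (a (n + k))) (fun n => ?_)
        (fun l => c (Fin.cons k l)) fun l => ?_
      · rw [norm_mul, RCLike.norm_conj]
        exact mul_le_one₀ (ha _) (norm_nonneg _) (ha _)
      · refine (hc (Fin.cons k l)).congr fun N => ?_
        unfold cesaroAvg
        simp only [cube_deriv]

/-- cube products and their conjugates are products of shifts. -/
lemma cube_prodShift (a : ℕ → ℂ) {t : ℕ} (h : Fin t → ℕ) :
    ∃ (k : ℕ) (sh : Fin k → ℕ) (cj cj' : Fin k → Bool),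
      prodShift a sh cj = cubeProd a h ∧
      prodShift a sh cj' = fun n => (starRingEnd ℂ) (cubeProd a h n) := by
  classical
  let e := Fintype.equivFin (Fin t → Bool)
  refine ⟨Fintype.card (Fin t → Bool), fun j => epsDot (e.symm j) h,
    fun j => decide ((univ.filter fun i => e.symm j i = true).card % 2 = 1),
    fun j => decide (¬ (univ.filter fun i => e.symm j i = true).card % 2 = 1), ?_, ?_⟩
  · funext n
    unfold prodShift cubeProd
    rw [← e.symm.prod_comp]
    simp only [decide_eq_true_eq]
  · funext n
    unfold prodShift cubeProd
    rw [← e.symm.prod_comp, map_prod]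
    refine prod_congr rfl fun j _ => ?_
    simp only [decide_eq_true_eq]
    split_ifs <;> simp

lemma main_aux
    (lo hi : ℕ → ℕ) (I : ℕ → Finset ℕ)
    (hI : ∀ N, I N = Finset.Icc (lo N) (hi N))
    (hIcard : Tendsto (fun N => (I N).card) atTop atTop)
    (a : ℕ → ℂ) (ha : ∀ n, ‖a n‖ ≤ 1)
    (herg : ∀ (k k' : ℕ) (sh : Fin k → ℕ) (cj : Fin k → Bool)
        (sh' : Fin k' → ℕ) (cj' : Fin k' → Bool) (β γ : ℂ) (φ : ℕ → ℂ),
      Tendsto (cesaroAvg I (prodShift a sh cj)) atTop (𝓝 β) →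
      Tendsto (cesaroAvg I (prodShift a sh' cj')) atTop (𝓝 γ) →
      (∀ h : ℕ, Tendsto (cesaroAvg I fun m =>
          prodShift a sh cj (m + h) * prodShift a sh' cj' m) atTop (𝓝 (φ h))) →
      Tendsto (fun H : ℕ => (H : ℂ)⁻¹ * ∑ h ∈ Finset.Icc 1 H, φ h) atTop (𝓝 (β * γ)))
    (t : ℕ) (v : ℝ)
    (c : (Fin (t + 1) → ℕ) → ℂ)
    (hc : ∀ h : Fin (t + 1) → ℕ, Tendsto (cesaroAvg I (cubeProd a h)) atTop (𝓝 (c h)))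
    (hlim : Tendsto (fun H : ℕ => ((H : ℂ) ^ (t + 1))⁻¹ *
        ∑ h ∈ Fintype.piFinset (fun _ : Fin (t + 1) => Finset.Icc 1 H), c h) atTop
        (𝓝 (v : ℂ)))
    (d : (Fin t → ℕ) → ℂ)
    (hd : ∀ h : Fin t → ℕ, Tendsto (cesaroAvg I (cubeProd a h)) atTop (𝓝 (d h))) :
    Tendsto (fun H : ℕ => ((H : ℝ) ^ t)⁻¹ *
        ∑ h ∈ Fintype.piFinset (fun _ : Fin t => Finset.Icc 1 H), ‖d h‖ ^ 2) atTop
      (𝓝 v) := by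
  set R : (Fin (t + 1) → ℕ) → ℝ := fun h => (c h).re with hRdef
  have hc1 : ∀ h, ‖c h‖ ≤ 1 := fun h =>
    le_of_tendsto' (hc h).norm fun N => ces_norm I _ (cube_norm a ha h) N
  have hR : ∀ h, |R h| ≤ 1 := fun h => (Complex.abs_re_le_norm _).trans (hc1 h)
  obtain ⟨L, hL⟩ := M_lim (t + 1) R hR (smono_cube hI hIcard (t + 1) a ha c hc)
  -- the diagonal limit
  have hdiag : Tendsto (fun H : ℕ => Tm Av (t + 1) (fun _ => H) R) atTop (𝓝 v) := by
    have := (Complex.continuous_re.tendsto _).comp hlim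
    rw [Complex.ofReal_re] at this
    refine this.congr fun H => ?_
    rw [Tm_Av_const]
    have e : (((H : ℂ) ^ (t + 1)))⁻¹ = ((((H : ℝ) ^ (t + 1))⁻¹ : ℝ) : ℂ) := by push_cast; rfl
    simp only [Function.comp]
    rw [e, Complex.re_ofReal_mul, Complex.re_sum]
  have hLv : L = v := by
    refine tendsto_nhds_unique (Metric.tendsto_atTop.2 fun ε hε => ?_) hdiag
    obtain ⟨K0, h0⟩ := hL (ε / 2) (by positivity)
    refine ⟨K0, fun H hH => ?_⟩
    rw [Real.dist_eq]
    exact (h0 _ fun _ => hH).trans_lt (by linarith)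
  subst hLv
  -- ergodicity
  have hE : ∀ l : Fin t → ℕ, Tendsto (fun K => Av K (fun k => R (Fin.cons k l))) atTop
      (𝓝 (‖d l‖ ^ 2)) := by
    intro l
    obtain ⟨k, sh, cj, cj', h1, h2⟩ := cube_prodShift a l
    have h3 := herg k k sh cj' sh cj ((starRingEnd ℂ) (d l)) (d l) (fun k => c (Fin.cons k l))
      (by
        rw [h2]
        refine ((Complex.continuous_conj.tendsto _).comp (hd l)).congr fun N => ?_
        simp only [Function.comp, cesaroAvg, map_mul, map_sum, map_inv₀, Complex.conj_natCast])
      (by rw [h1]; exact hd l)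
      (fun h => by
        rw [h1, h2]
        refine (hc (Fin.cons h l)).congr fun N => ?_
        simp only [cesaroAvg, cube_cons]
        congr 1
        exact sum_congr rfl fun n _ => mul_comm _ _)
    have h4 := (Complex.continuous_re.tendsto _).comp h3
    have e : ((starRingEnd ℂ) (d l) * d l).re = ‖d l‖ ^ 2 := by
      rw [mul_comm, Complex.mul_conj, Complex.ofReal_re, Complex.normSq_eq_norm_sq]
    rw [e] at h4
    refine h4.congr fun K => ?_
    have e : ((K : ℂ))⁻¹ = (((K : ℝ)⁻¹ : ℝ) : ℂ) := by push_cast; rfl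
    simp only [Function.comp]
    rw [e, Complex.re_ofReal_mul, Complex.re_sum]
    rfl
  refine Metric.tendsto_atTop.2 fun ε hε => ?_
  obtain ⟨K0, h0⟩ := hL (ε / 2) (by positivity)
  refine ⟨K0, fun H hH => ?_⟩
  have hK : Tendsto (fun K => Tm Av (t + 1) (Fin.cons K (fun _ => H)) R) atTop
      (𝓝 (((H : ℝ) ^ t)⁻¹ *
        ∑ h ∈ Fintype.piFinset (fun _ : Fin t => Finset.Icc 1 H), ‖d h‖ ^ 2)) := by
    have : Tendsto (fun K => ((H : ℝ) ^ t)⁻¹ *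
        ∑ h ∈ Fintype.piFinset (fun _ : Fin t => Finset.Icc 1 H),
          Av K (fun k => R (Fin.cons k h))) atTop (𝓝 (((H : ℝ) ^ t)⁻¹ *
        ∑ h ∈ Fintype.piFinset (fun _ : Fin t => Finset.Icc 1 H), ‖d h‖ ^ 2)) :=
      (tendsto_finsetSum _ fun l _ => hE l).const_mul _
    refine this.congr fun K => ?_
    rw [← Tm_Av_const H t (fun h => Av K (fun k => R (Fin.cons k h))),
      ← Tm_swap isAvg_Av (isAvg_Av K)]
    simp [Tm]
  have hle := le_of_tendsto (((hK.sub_const L).abs)) (b := ε / 2) (by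
    filter_upwards [eventually_ge_atTop K0] with K hKK
    refine h0 _ fun i => ?_
    refine Fin.cases ?_ (fun i => ?_) i
    · simpa using hKK
    · simpa using hH)
  rw [Real.dist_eq]
  linarith

/-- Step 1 of the proof of Theorem 4.1: if `a` is bounded by `1`, admits correlations
for Cesàro averages on intervals `I` with `|I_N| → ∞`, and the induced Furstenberg system
is ergodic (expressed by the mean ergodic identity
`lim_H 𝔼_{h∈[H]} (𝔼_{m∈I} b(m+h)c(m)) = 𝔼_{m∈I} b ⋅ 𝔼_{m∈I} c` for all finite products
`b, c` of shifts of `a` and `conj a`), then for every `s ≥ 2`: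
`‖a‖_{U^s(I)}^{2^s} = 𝔼_{h∈ℕ^{s-1}} |𝔼_{n∈I} ∏_{ε∈{0,1}^{s-1}} C^{|ε|} a(n+ε·h)|²`. -/
theorem ergodic_uniformity_seminorm_formula
    (lo hi : ℕ → ℕ) (I : ℕ → Finset ℕ)
    (hI : ∀ N, I N = Finset.Icc (lo N) (hi N))
    (hIcard : Tendsto (fun N => (I N).card) atTop atTop)
    (a : ℕ → ℂ) (ha : ∀ n, ‖a n‖ ≤ 1)
    (hcorr : ∀ (k : ℕ) (sh : Fin k → ℕ) (cj : Fin k → Bool),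
      ∃ L : ℂ, Tendsto (cesaroAvg I (prodShift a sh cj)) atTop (𝓝 L))
    (herg : ∀ (k k' : ℕ) (sh : Fin k → ℕ) (cj : Fin k → Bool)
        (sh' : Fin k' → ℕ) (cj' : Fin k' → Bool) (β γ : ℂ) (φ : ℕ → ℂ),
      Tendsto (cesaroAvg I (prodShift a sh cj)) atTop (𝓝 β) →
      Tendsto (cesaroAvg I (prodShift a sh' cj')) atTop (𝓝 γ) →
      (∀ h : ℕ, Tendsto (cesaroAvg I fun m =>
          prodShift a sh cj (m + h) * prodShift a sh' cj' m) atTop (𝓝 (φ h))) →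
      Tendsto (fun H : ℕ => (H : ℂ)⁻¹ * ∑ h ∈ Finset.Icc 1 H, φ h) atTop (𝓝 (β * γ)))
    (s : ℕ) (hs : 2 ≤ s)
    (u : ℝ) (hu : 0 ≤ u)
    (c : (Fin s → ℕ) → ℂ)
    (hc : ∀ h : Fin s → ℕ, Tendsto (cesaroAvg I (cubeProd a h)) atTop (𝓝 (c h)))
    (hlim : Tendsto (fun H : ℕ => ((H : ℂ) ^ s)⁻¹ *
        ∑ h ∈ Fintype.piFinset (fun _ : Fin s => Finset.Icc 1 H), c h) atTop
        (𝓝 ((u : ℂ) ^ (2 ^ s))))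
    (d : (Fin (s - 1) → ℕ) → ℂ)
    (hd : ∀ h : Fin (s - 1) → ℕ, Tendsto (cesaroAvg I (cubeProd a h)) atTop (𝓝 (d h))) :
    Tendsto (fun H : ℕ => ((H : ℝ) ^ (s - 1))⁻¹ *
        ∑ h ∈ Fintype.piFinset (fun _ : Fin (s - 1) => Finset.Icc 1 H), ‖d h‖ ^ 2) atTop
      (𝓝 (u ^ (2 ^ s))) := by
  obtain ⟨t, rfl⟩ : ∃ t, s = t + 1 := ⟨s - 1, by omega⟩
  exact main_aux lo hi I hI hIcard a ha herg t (u ^ (2 ^ (t + 1))) c hc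
    (by push_cast; exact hlim) d hd
end

section
/- Let f₁,…,f_s : ℕ → ℂ be bounded multiplicative functions with |f_j(p)| = 1 for all primes p, let n₁,…,n_s ∈ ℕ, and let I = ([N_k]) be intervals with N_k → ∞. Suppose all the relevant logarithmic limits exist. Then 𝔼^{log}_{m∈I} ∏_{j=1}^s f_j(m+n_j) = 𝔼_{p∈ℙ} c_p · (𝔼^{log}_{m∈I} ∏_{j=1}^s f_j(m + p·n_j)), where c_p = ∏_{j=1}^s conj(f_j(p)), provided one assumes the identity 𝔼_{p∈ℙ} c_p(𝔼^{log}_{m∈I} ∏_j a_j(pm+pn_j)) = 𝔼_{p∈ℙ} c_p(𝔼^{log}_{m∈I} ∏_j a_j(m+pn_j)) (Tao's identity). In particular, the intermediate step 𝔼^{log}_{m∈I} ∏_j f_j(m+n_j) = c_p · 𝔼^{log}_{m∈I} ∏_j f_j(pm+pn_j) + O(1/p) holds for each prime p. -/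
open Filter Finset Topology

/-- Logarithmic average of `f` over `[1, N k]`. -/
noncomputable def logAvgIcc (N : ℕ → ℕ) (f : ℕ → ℂ) (k : ℕ) : ℂ :=
  ((∑ n ∈ Finset.Icc 1 (N k), (n : ℝ)⁻¹ : ℝ) : ℂ)⁻¹ * ∑ n ∈ Finset.Icc 1 (N k), f n / (n : ℂ)

/-- Average over the primes: `𝔼_{p∈ℙ} x(p) = lim_N (log N / N) ∑_{p ≤ N} x(p)`;
this is the `N`-th approximant. -/
noncomputable def primeAvg (x : ℕ → ℂ) (N : ℕ) : ℂ :=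
  ((Real.log N / N : ℝ) : ℂ) * ∑ p ∈ (Finset.range (N + 1)).filter Nat.Prime, x p

/-- `π(n) log n / n - ψ(n)/n → 0`. -/
lemma aux_pi_sub_psi :
    Tendsto (fun n : ℕ => Real.log n / n * (Nat.primeCounting n : ℝ) - Chebyshev.psi n / n)
      atTop (𝓝 0) := by
  have h1 : (fun x : ℝ => Real.log x / x * ((Nat.primeCounting ⌊x⌋₊ : ℝ) - Chebyshev.theta x / Real.log x))
      =O[atTop] (fun x : ℝ => Real.log x / x * (x / Real.log x ^ 2)) :=
    (Asymptotics.isBigO_refl _ _).mul Chebyshev.primeCounting_sub_theta_div_log_isBigO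
  have h2 : Tendsto (fun x : ℝ => Real.log x / x * (x / Real.log x ^ 2)) atTop (𝓝 0) := by
    refine Tendsto.congr' ?_ Real.tendsto_log_atTop.inv_tendsto_atTop
    filter_upwards [eventually_gt_atTop 1] with x hx
    have := Real.log_pos hx
    simp only [Pi.inv_apply]
    field_simp
  have h3 := h1.trans_tendsto h2
  have h4 : (fun x : ℝ => (Chebyshev.psi x - Chebyshev.theta x) * x⁻¹)
      =O[atTop] (fun x : ℝ => Real.sqrt x * x⁻¹) :=
    Chebyshev.isBigO_psi_sub_theta_sqrt.mul (Asymptotics.isBigO_refl _ _)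
  have h5 : Tendsto (fun x : ℝ => Real.sqrt x * x⁻¹) atTop (𝓝 0) := by
    refine Tendsto.congr' ?_ Real.tendsto_sqrt_atTop.inv_tendsto_atTop
    filter_upwards [eventually_gt_atTop 0] with x hx
    have h := Real.sq_sqrt hx.le
    have := Real.sqrt_pos.2 hx
    simp only [Pi.inv_apply]
    rw [eq_comm, ← div_eq_mul_inv, div_eq_iff hx.ne']
    field_simp
    exact h
  have h6 := (h3.sub (h4.trans_tendsto h5)).comp (tendsto_natCast_atTop_atTop (R := ℝ))
  rw [sub_zero] at h6
  refine h6.congr' ?_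
  filter_upwards [eventually_gt_atTop 1] with n hn
  have hn' : (1 : ℝ) < n := by exact_mod_cast hn
  have := Real.log_pos hn'
  simp only [Function.comp_apply, Nat.floor_natCast]
  field_simp
  ring

/-- If `ψ(n)/n` converges then its limit is `1`. -/
lemma aux_psi_lim (L : ℝ) (h : Tendsto (fun n : ℕ => Chebyshev.psi n / n) atTop (𝓝 L)) :
    L = 1 := by
  have h1 := LSeries_tendsto_sub_mul_nhds_one_of_tendsto_sum_div_and_nonneg
    (fun n => ArithmeticFunction.vonMangoldt n) (l := L)
    (by
      refine h.congr fun n => ?_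
      simp only [Chebyshev.psi, Nat.floor_natCast]
      rfl) (fun n => ArithmeticFunction.vonMangoldt_nonneg)
  have hc := ArithmeticFunction.vonMangoldt.continuousOn_LFunctionResidueClassAux (q := 1) (1 : ZMod 1)
  have he := ArithmeticFunction.vonMangoldt.eqOn_LFunctionResidueClassAux (q := 1) (a := (1 : ZMod 1))
    isUnit_one
  have hres : ∀ n, ArithmeticFunction.vonMangoldt.residueClass (1 : ZMod 1) n =
      ArithmeticFunction.vonMangoldt n := by
    intro n
    simp only [ArithmeticFunction.vonMangoldt.residueClass]
    apply Set.indicator_of_mem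
    exact Subsingleton.elim _ _
  have hmap : Tendsto (fun s : ℝ => (s : ℂ)) (𝓝[>] 1) (𝓝[{s : ℂ | 1 ≤ s.re}] 1) := by
    apply tendsto_nhdsWithin_of_tendsto_nhds_of_eventually_within
    · exact tendsto_nhdsWithin_of_tendsto_nhds
        (by simpa using (Complex.continuous_ofReal.tendsto (1 : ℝ)))
    · filter_upwards [self_mem_nhdsWithin] with s hs
      simpa using le_of_lt hs
  have h2 := (hc 1 (by simp)).tendsto.comp hmap
  have h0 : Tendsto (fun s : ℝ => ((s : ℂ) - 1)) (𝓝[>] 1) (𝓝 0) := by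
    have : Tendsto (fun s : ℝ => ((s : ℂ) - 1)) (𝓝 1) (𝓝 (((1 : ℝ) : ℂ) - 1)) :=
      Continuous.tendsto (by fun_prop) 1
    simp only [Complex.ofReal_one, sub_self] at this
    exact tendsto_nhdsWithin_of_tendsto_nhds this
  have h3 := (h0.mul h2).add_const 1
  rw [zero_mul, zero_add] at h3
  have h4 : (L : ℂ) = 1 := by
    refine tendsto_nhds_unique h1 (h3.congr' ?_)
    filter_upwards [self_mem_nhdsWithin] with s hs
    have hs' : (1 : ℝ) < s := hs
    have hs1 : (s : ℂ) - 1 ≠ 0 := by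
      rw [sub_ne_zero]; exact_mod_cast hs'.ne'
    have := he (show (s : ℂ) ∈ {s : ℂ | 1 < s.re} by simpa using hs')
    simp only [Function.comp_apply, this, hres]
    simp only [Nat.totient_one, Nat.cast_one, inv_one]
    field_simp
    ring
  exact_mod_cast h4

lemma aux_pi_lim (L : ℝ)
    (h : Tendsto (fun n : ℕ => Real.log n / n * (Nat.primeCounting n : ℝ)) atTop (𝓝 L)) :
    L = 1 := by
  apply aux_psi_lim
  have := h.sub aux_pi_sub_psi
  simpa using this

/-- logarithmic count of a residue class -/
lemma aux_residue (p n N : ℕ) (hp : 0 < p) :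
    ∑ m ∈ (Finset.Icc 1 N).filter (fun m => p ∣ m + n), (m : ℝ)⁻¹ ≤
      1 + (∑ m ∈ Finset.Icc 1 N, (m : ℝ)⁻¹) / p := by
  classical
  set S := (Finset.Icc 1 N).filter (fun m => p ∣ m + n) with hS
  let g : ℕ → ℝ := fun q => if q = 0 then 1 else (q : ℝ)⁻¹ / p
  have hinj : Set.InjOn (fun m => (m - 1) / p) (S : Set ℕ) := by
    intro a ha b hb hab
    simp only [hS, Finset.coe_filter, Finset.mem_Icc, Set.mem_ofPred_eq] at ha hb
    simp only at hab
    have h1 : a ≡ b [MOD p] := by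
      apply Nat.ModEq.add_right_cancel' n
      exact ((Nat.modEq_zero_iff_dvd.2 ha.2).trans (Nat.modEq_zero_iff_dvd.2 hb.2).symm)
    have h2 : a - 1 ≡ b - 1 [MOD p] := by
      apply Nat.ModEq.add_right_cancel' 1
      rwa [Nat.sub_add_cancel ha.1.1, Nat.sub_add_cancel hb.1.1]
    have h3 : (a - 1) % p = (b - 1) % p := h2
    have := Nat.div_add_mod (a - 1) p
    have h5 := Nat.div_add_mod (b - 1) p
    rw [hab, h3] at this
    omega
  have hp' : (0 : ℝ) < p := by exact_mod_cast hp
  have hg : ∀ q, 0 ≤ g q := by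
    intro q; simp only [g]; split_ifs <;> positivity
  calc ∑ m ∈ S, (m : ℝ)⁻¹ ≤ ∑ m ∈ S, g ((m - 1) / p) := by
        apply Finset.sum_le_sum
        intro m hm
        simp only [hS, Finset.mem_filter, Finset.mem_Icc] at hm
        have hm1 : (1 : ℝ) ≤ m := by exact_mod_cast hm.1.1
        simp only [g]
        split_ifs with h
        · exact inv_le_one_of_one_le₀ hm1
        · rw [div_eq_mul_inv, ← mul_inv]
          have hq : 0 < (m - 1) / p := Nat.pos_of_ne_zero h
          apply inv_anti₀
          · positivity
          · have := Nat.div_mul_le_self (m - 1) p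
            exact_mod_cast (this.trans (Nat.sub_le _ _))
    _ = ∑ q ∈ S.image (fun m => (m - 1) / p), g q := (Finset.sum_image hinj).symm
    _ ≤ ∑ q ∈ Finset.range (N + 1), g q := by
        apply Finset.sum_le_sum_of_subset_of_nonneg
        · intro q hq
          simp only [Finset.mem_image, hS, Finset.mem_filter, Finset.mem_Icc] at hq
          obtain ⟨m, hm, rfl⟩ := hq
          have := Nat.div_le_self (m - 1) p
          simp only [Finset.mem_range]
          omega
        · intros; exact hg _
    _ = 1 + (∑ m ∈ Finset.Icc 1 N, (m : ℝ)⁻¹) / p := by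
        rw [Finset.range_eq_Ico, Finset.sum_eq_sum_Ico_succ_bot (by omega), Finset.sum_div]
        congr 1
        apply Finset.sum_congr
        · ext; simp
        · intro m hm
          simp only [Finset.mem_Icc] at hm
          simp only [g]
          rw [if_neg (by omega)]

lemma aux_harm_le (n : ℕ) : ∑ m ∈ Finset.Icc 1 n, (m : ℝ)⁻¹ ≤ 1 + Real.log n := by
  have := harmonic_le_one_add_log n
  rw [harmonic_eq_sum_Icc] at this
  push_cast at this
  exact this

lemma aux_harm_tendsto : Tendsto (fun n : ℕ => ∑ m ∈ Finset.Icc 1 n, (m : ℝ)⁻¹) atTop atTop := by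
  have h : Tendsto (fun n : ℕ => Real.log ((n + 1 : ℕ) : ℝ)) atTop atTop :=
    (Real.tendsto_log_atTop.comp tendsto_natCast_atTop_atTop).comp (tendsto_add_atTop_nat 1)
  refine tendsto_atTop_mono (fun n => ?_) h
  have := log_add_one_le_harmonic n
  rw [harmonic_eq_sum_Icc] at this
  push_cast at this ⊢
  exact this

/-- The pointwise estimate. -/
lemma aux_pointwise (s : ℕ) (f : Fin s → ℕ → ℂ)
    (hmult : ∀ j m n, Nat.Coprime m n → f j (m * n) = f j m * f j n)
    (hunim : ∀ j p, Nat.Prime p → ‖f j p‖ = 1) (nn : Fin s → ℕ)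
    (M : ℝ) (hM : 0 ≤ M) (hbd : ∀ x : Fin s → ℕ, ‖∏ j, f j (x j)‖ ≤ M)
    (p : ℕ) (hp : p.Prime) (m : ℕ) :
    ‖(∏ j, f j (m + nn j)) - (∏ j, (starRingEnd ℂ) (f j p)) * ∏ j, f j (p * m + p * nn j)‖ ≤
      2 * M * ∑ j, (if p ∣ m + nn j then (1 : ℝ) else 0) := by
  by_cases h : ∃ j, p ∣ m + nn j
  · obtain ⟨j, hj⟩ := h
    have h1 : (1 : ℝ) ≤ ∑ j, (if p ∣ m + nn j then (1 : ℝ) else 0) := by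
      have := Finset.single_le_sum (f := fun j => (if p ∣ m + nn j then (1 : ℝ) else 0))
        (fun i _ => by split_ifs <;> simp) (Finset.mem_univ j)
      simpa [hj] using this
    have hc : ‖∏ j, (starRingEnd ℂ) (f j p)‖ = 1 := by
      rw [norm_prod]
      exact Finset.prod_eq_one fun j _ => by rw [RCLike.norm_conj, hunim j p hp]
    calc _ ≤ ‖∏ j, f j (m + nn j)‖ +
          ‖(∏ j, (starRingEnd ℂ) (f j p)) * ∏ j, f j (p * m + p * nn j)‖ := norm_sub_le _ _
      _ ≤ M + M := by
          rw [norm_mul, hc, one_mul]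
          exact add_le_add (hbd _) (hbd _)
      _ = 2 * M * 1 := by ring
      _ ≤ _ := by gcongr
  · push Not at h
    have : (∏ j, f j (m + nn j)) -
        (∏ j, (starRingEnd ℂ) (f j p)) * ∏ j, f j (p * m + p * nn j) = 0 := by
      rw [← Finset.prod_mul_distrib, sub_eq_zero]
      apply Finset.prod_congr rfl
      intro j _
      rw [← mul_add, hmult j p _ ((Nat.Prime.coprime_iff_not_dvd hp).2 (h j)), ← mul_assoc,
        mul_comm ((starRingEnd ℂ) (f j p)), Complex.mul_conj, Complex.normSq_eq_norm_sq,
        hunim j p hp]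
      simp
    rw [this, norm_zero]
    exact mul_nonneg (by positivity) (Finset.sum_nonneg fun i _ => by split_ifs <;> simp)

lemma aux_step (s : ℕ) (f : Fin s → ℕ → ℂ)
    (hmult : ∀ j m n, Nat.Coprime m n → f j (m * n) = f j m * f j n)
    (hunim : ∀ j p, Nat.Prime p → ‖f j p‖ = 1) (nn : Fin s → ℕ)
    (M : ℝ) (hM : 0 ≤ M) (hbd : ∀ x : Fin s → ℕ, ‖∏ j, f j (x j)‖ ≤ M)
    (N : ℕ → ℕ) (hN : StrictMono N) (A D : ℂ) (p : ℕ) (hp : p.Prime)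
    (hA : Tendsto (logAvgIcc N fun m => ∏ j, f j (m + nn j)) atTop (𝓝 A))
    (hD : Tendsto (logAvgIcc N fun m => ∏ j, f j (p * m + p * nn j)) atTop (𝓝 D)) :
    ‖A - (∏ j, (starRingEnd ℂ) (f j p)) * D‖ ≤ (2 * M * s) / p := by
  set c := ∏ j, (starRingEnd ℂ) (f j p) with hc
  let H : ℕ → ℝ := fun k => ∑ m ∈ Finset.Icc 1 (N k), (m : ℝ)⁻¹
  have hH : Tendsto H atTop atTop := aux_harm_tendsto.comp hN.tendsto_atTop
  have hlim := (hA.sub (hD.const_mul c)).norm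
  have hr : Tendsto (fun k => 2 * M * s * ((H k)⁻¹ + 1 / p)) atTop
      (𝓝 (2 * M * s * (0 + 1 / p))) :=
    (hH.inv_tendsto_atTop.add_const _).const_mul _
  have hfin : 2 * M * s * (0 + 1 / (p : ℝ)) = (2 * M * s) / p := by ring
  rw [hfin] at hr
  refine le_of_tendsto_of_tendsto hlim hr ?_
  filter_upwards [hH.eventually_gt_atTop 0] with k hk
  have e : logAvgIcc N (fun m => ∏ j, f j (m + nn j)) k -
      c * logAvgIcc N (fun m => ∏ j, f j (p * m + p * nn j)) k =
      ((H k : ℝ) : ℂ)⁻¹ * ∑ m ∈ Finset.Icc 1 (N k),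
        ((∏ j, f j (m + nn j)) - c * ∏ j, f j (p * m + p * nn j)) / (m : ℂ) := by
    simp only [logAvgIcc, H, sub_div, Finset.sum_sub_distrib, mul_sub, mul_div_assoc,
      ← Finset.mul_sum]
    ring
  rw [e, norm_mul, norm_inv, Complex.norm_real, Real.norm_of_nonneg hk.le]
  have hb : ‖∑ m ∈ Finset.Icc 1 (N k),
        ((∏ j, f j (m + nn j)) - c * ∏ j, f j (p * m + p * nn j)) / (m : ℂ)‖ ≤
      2 * M * s * (1 + H k / p) := by
    calc _ ≤ ∑ m ∈ Finset.Icc 1 (N k),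
          2 * M * (∑ j, (if p ∣ m + nn j then (m : ℝ)⁻¹ else 0)) := by
          refine (norm_sum_le _ _).trans (Finset.sum_le_sum fun m _ => ?_)
          rw [norm_div, Complex.norm_natCast, div_eq_mul_inv]
          refine (mul_le_mul_of_nonneg_right
            (aux_pointwise s f hmult hunim nn M hM hbd p hp m) (by positivity)).trans_eq ?_
          rw [mul_assoc, Finset.sum_mul]
          simp only [ite_mul, one_mul, zero_mul]
      _ = 2 * M * ∑ j, ∑ m ∈ (Finset.Icc 1 (N k)).filter (fun m => p ∣ m + nn j), (m : ℝ)⁻¹ := by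
          rw [← Finset.mul_sum, Finset.sum_comm]
          simp only [Finset.sum_filter]
      _ ≤ 2 * M * ∑ j : Fin s, (1 + H k / p) := by
          gcongr with j
          exact aux_residue p (nn j) (N k) hp.pos
      _ = 2 * M * s * (1 + H k / p) := by
          simp only [Finset.sum_const, Finset.card_univ, Fintype.card_fin, nsmul_eq_mul]
          ring
  calc (H k)⁻¹ * _ ≤ (H k)⁻¹ * (2 * M * s * (1 + H k / p)) := by gcongr
    _ = 2 * M * s * ((H k)⁻¹ + 1 / p) := by field_simp

lemma aux_log_sq : Tendsto (fun n : ℕ => Real.log n / n * (1 + Real.log n)) atTop (𝓝 0) := by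
  have h1 : Tendsto (fun x : ℝ => Real.log x / x) atTop (𝓝 0) :=
    Real.isLittleO_log_id_atTop.tendsto_div_nhds_zero
  have h2 : Tendsto (fun x : ℝ => Real.log x ^ 2 / x) atTop (𝓝 0) :=
    (Real.isLittleO_pow_log_id_atTop (n := 2)).tendsto_div_nhds_zero
  have h3 := (h1.add h2).comp (tendsto_natCast_atTop_atTop (R := ℝ))
  rw [add_zero] at h3
  refine h3.congr fun n => ?_
  simp only [Function.comp_apply]
  ring

lemma aux_final (A LD : ℂ) (x : ℕ → ℂ) (K : ℝ) (hK : 0 ≤ K)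
    (hx : ∀ p, Nat.Prime p → ‖A - x p‖ ≤ K / p)
    (hL : Tendsto (primeAvg x) atTop (𝓝 LD)) : LD = A := by
  let r : ℕ → ℝ := fun n => Real.log n / n * (Nat.primeCounting n : ℝ)
  have hdiff : Tendsto (fun n => A * (r n : ℂ) - primeAvg x n) atTop (𝓝 0) := by
    have hz := aux_log_sq.const_mul K
    rw [mul_zero] at hz
    refine squeeze_zero_norm (fun n => ?_) hz
    have hl : 0 ≤ Real.log n / n := div_nonneg (Real.log_natCast_nonneg n) (by positivity)
    have e : A * (r n : ℂ) - primeAvg x n = ((Real.log n / n : ℝ) : ℂ) *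
        ∑ p ∈ (Finset.range (n + 1)).filter Nat.Prime, (A - x p) := by
      rw [Finset.sum_sub_distrib, Finset.sum_const, ← Nat.primesLE_eq_filter_range,
        Nat.primesLE_card_eq_primeCounting]
      simp only [r, primeAvg, nsmul_eq_mul, ← Nat.primesLE_eq_filter_range]
      push_cast
      ring
    rw [e, norm_mul, Complex.norm_real, Real.norm_of_nonneg hl]
    calc _ ≤ Real.log n / n * (K * (1 + Real.log n)) := by
          gcongr
          calc _ ≤ ∑ p ∈ (Finset.range (n + 1)).filter Nat.Prime, K * (p : ℝ)⁻¹ := by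
                refine (norm_sum_le _ _).trans (Finset.sum_le_sum fun p hp => ?_)
                rw [← div_eq_mul_inv]
                exact hx p (Finset.mem_filter.1 hp).2
            _ ≤ ∑ p ∈ Finset.Icc 1 n, K * (p : ℝ)⁻¹ := by
                apply Finset.sum_le_sum_of_subset_of_nonneg
                · intro p hp
                  simp only [Finset.mem_filter, Finset.mem_range] at hp
                  have := hp.2.pos
                  simp only [Finset.mem_Icc]
                  omega
                · intros; positivity
            _ ≤ _ := by
                rw [← Finset.mul_sum]
                gcongr
                exact aux_harm_le n
      _ = _ := by ring
  have hAr : Tendsto (fun n => A * (r n : ℂ)) atTop (𝓝 LD) := by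
    have := hdiff.add hL
    simpa using this
  by_cases hA : A = 0
  · subst hA
    simp only [zero_mul] at hAr
    exact tendsto_nhds_unique hAr tendsto_const_nhds
  · have h1 : Tendsto (fun n => (r n : ℂ)) atTop (𝓝 (A⁻¹ * LD)) := by
      refine (hAr.const_mul A⁻¹).congr fun n => ?_
      rw [← mul_assoc, inv_mul_cancel₀ hA, one_mul]
    have h2 : Tendsto r atTop (𝓝 (A⁻¹ * LD).re) := by
      have := (Complex.continuous_re.tendsto _).comp h1
      exact this
    have h3 := aux_pi_lim _ h2
    rw [h3] at h2
    have h4 : Tendsto (fun n => (r n : ℂ)) atTop (𝓝 ((1 : ℝ) : ℂ)) :=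
      (Complex.continuous_ofReal.tendsto _).comp h2
    have h5 := h4.const_mul A
    rw [Complex.ofReal_one, mul_one] at h5
    exact tendsto_nhds_unique hAr h5


/-- Corollary 2.10 of the paper: for bounded multiplicative functions `f₁,…,f_s` with
`|f_j(p)| = 1` at primes, assuming all relevant logarithmic limits exist and assuming
Tao's identity (`LD = LB` below),
`𝔼^{log}_{m∈I} ∏ f_j(m+n_j) = 𝔼_{p∈ℙ} c_p 𝔼^{log}_{m∈I} ∏ f_j(m+p n_j)` with
`c_p = ∏ conj(f_j(p))`; and in particular, for each prime `p`,
`𝔼^{log}_{m∈I} ∏ f_j(m+n_j) = c_p ⋅ 𝔼^{log}_{m∈I} ∏ f_j(pm+p n_j) + O(1/p)`. -/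
theorem multiplicative_prime_dilation_identity
    (s : ℕ) (hs : 1 ≤ s) (f : Fin s → ℕ → ℂ)
    (hmult : ∀ j m n, Nat.Coprime m n → f j (m * n) = f j m * f j n)
    (hbd : ∀ j, ∃ C : ℝ, ∀ n, ‖f j n‖ ≤ C)
    (hunim : ∀ j p, Nat.Prime p → ‖f j p‖ = 1)
    (nn : Fin s → ℕ) (hnn : ∀ j, 0 < nn j)
    (N : ℕ → ℕ) (hN : StrictMono N)
    (A : ℂ)
    (hA : Tendsto (logAvgIcc N fun m => ∏ j, f j (m + nn j)) atTop (𝓝 A))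
    (B D : ℕ → ℂ)
    (hB : ∀ p, Nat.Prime p →
      Tendsto (logAvgIcc N fun m => ∏ j, f j (m + p * nn j)) atTop (𝓝 (B p)))
    (hD : ∀ p, Nat.Prime p →
      Tendsto (logAvgIcc N fun m => ∏ j, f j (p * m + p * nn j)) atTop (𝓝 (D p)))
    (LB LD : ℂ)
    (hLB : Tendsto (primeAvg fun p => (∏ j, (starRingEnd ℂ) (f j p)) * B p) atTop (𝓝 LB))
    (hLD : Tendsto (primeAvg fun p => (∏ j, (starRingEnd ℂ) (f j p)) * D p) atTop (𝓝 LD))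
    (hTao : LD = LB) :
    A = LB ∧
      ∃ K : ℝ, ∀ p, Nat.Prime p →
        ‖A - (∏ j, (starRingEnd ℂ) (f j p)) * D p‖ ≤ K / p := by
  choose C hC using hbd
  have hM : 0 ≤ ∏ j, C j :=
    Finset.prod_nonneg fun j _ => (norm_nonneg _).trans (hC j 0)
  have hb : ∀ x : Fin s → ℕ, ‖∏ j, f j (x j)‖ ≤ ∏ j, C j := by
    intro x
    rw [norm_prod]
    exact Finset.prod_le_prod (fun _ _ => norm_nonneg _) (fun j _ => hC j _)
  have hstep : ∀ p, Nat.Prime p →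
      ‖A - (∏ j, (starRingEnd ℂ) (f j p)) * D p‖ ≤ (2 * (∏ j, C j) * s) / p := fun p hp =>
    aux_step s f hmult hunim nn _ hM hb N hN A (D p) p hp hA (hD p hp)
  refine ⟨?_, _, hstep⟩
  rw [← hTao]
  exact (aux_final A LD _ _ (by positivity) hstep hLD).symm
end

section
/- There exists a bounded sequence b : ℕ → {−1, 1}, namely b(n) = (−1)^{n+k} for n ∈ [k², (k+1)²), such that the Gowers norms of its truncations vanish in the limit, lim_{N→∞} ‖b·1_{[N]} (extended periodically to ℤ_N)‖_{U^s(ℤ_N)} = 0 for every s ∈ ℕ, while the local uniformity seminorm on I = ([N])_{N∈ℕ} satisfies ‖b‖_{U^2(I)} = 1. -/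
open Filter Finset Topology

/-- Gowers uniformity norm `U^s(ℤ_L)` of the `L`-periodic sequence `n ↦ a (n % L)`. -/
noncomputable def gowersNorm (L : ℕ) : ℕ → (ℕ → ℂ) → ℝ
  | 0, _ => 0
  | 1, a => ‖(L : ℂ)⁻¹ * ∑ m ∈ Finset.range L, a (m % L)‖
  | (s + 2), a =>
      ((L : ℝ)⁻¹ * ∑ h ∈ Finset.range L,
        gowersNorm L (s + 1)
          (fun n => a ((n + h) % L) * (starRingEnd ℂ) (a (n % L))) ^ (2 ^ (s + 1)))
        ^ (((2 : ℝ) ^ (s + 2))⁻¹)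

noncomputable section GowersAux

open Complex

/-- Normalised average on `ZMod N`. -/
def avgZ (N : ℕ) [NeZero N] (f : ZMod N → ℂ) : ℂ := (N : ℂ)⁻¹ * ∑ x, f x

/-- Multiplicative derivative. -/
def mder (N : ℕ) (h : ZMod N) (f : ZMod N → ℂ) : ZMod N → ℂ :=
  fun x => f (x + h) * (starRingEnd ℂ) (f x)

/-- The power `‖f‖_{U^{s+1}}^{2^{s+1}}`. -/
def gpow (N : ℕ) [NeZero N] : ℕ → (ZMod N → ℂ) → ℝ
  | 0, f => ‖avgZ N f‖ ^ 2
  | s + 1, f => (N : ℝ)⁻¹ * ∑ h, gpow N s (mder N h f)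

def qpow (N : ℕ) [NeZero N] : ℕ → (ZMod N → ℂ) → ℂ
  | 0, f => avgZ N f
  | s + 1, f => (N : ℂ)⁻¹ * ∑ h, qpow N s (mder N h f)

def dpow (N : ℕ) [NeZero N] : ℕ → (ZMod N → ℂ) → (ZMod N → ℂ) → ℂ
  | 0, f, g => avgZ N f * (starRingEnd ℂ) (avgZ N g)
  | s + 1, f, g => (N : ℂ)⁻¹ * ∑ h, dpow N s (mder N h f) (mder N h g)

variable {N : ℕ} [NeZero N]

lemma gpow_nonneg (s : ℕ) (f : ZMod N → ℂ) : 0 ≤ gpow N s f := by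
  induction s generalizing f with
  | zero => simp only [gpow]; positivity
  | succ s ih =>
    simp only [gpow]
    exact mul_nonneg (by positivity) (Finset.sum_nonneg fun h _ => ih _)

lemma cast_card_pos : (0 : ℝ) < N := by
  have := NeZero.ne N
  positivity

lemma avg_const_le (u : ZMod N → ℝ) (c : ℝ) (hu : ∀ x, u x ≤ c) :
    (N : ℝ)⁻¹ * ∑ x, u x ≤ c := by
  have hN : (0 : ℝ) < N := cast_card_pos
  have : ∑ x, u x ≤ N * c := by
    calc ∑ x, u x ≤ ∑ _x : ZMod N, c := Finset.sum_le_sum fun x _ => hu x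
      _ = N * c := by simp [ZMod.card]
  rw [inv_mul_le_iff₀ hN]
  exact this

lemma gpow_smul (s : ℕ) (c : ℂ) (f : ZMod N → ℂ) :
    gpow N s (fun x => c * f x) = ‖c‖ ^ (2 ^ (s + 1)) * gpow N s f := by
  induction s generalizing f c with
  | zero =>
    simp only [gpow, avgZ]
    rw [← Finset.mul_sum, mul_left_comm, norm_mul, mul_pow]
    simp
  | succ s ih =>
    simp only [gpow]
    have : ∀ h, mder N h (fun x => c * f x) =
        fun x => (c * (starRingEnd ℂ) c) * mder N h f x := by
      intro h; funext x; simp only [mder, map_mul]; ring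
    simp only [this, ih]
    rw [← Finset.mul_sum, norm_mul, RCLike.norm_conj]
    ring

lemma norm_avgZ_le (f : ZMod N → ℂ) : ‖avgZ N f‖ ≤ (N : ℝ)⁻¹ * ∑ x, ‖f x‖ := by
  unfold avgZ
  rw [norm_mul]
  simp only [norm_inv, Complex.norm_natCast]
  exact mul_le_mul_of_nonneg_left (norm_sum_le _ _) (by positivity)

lemma gpow_le_L1 (s : ℕ) (f : ZMod N → ℂ) (hf : ∀ x, ‖f x‖ ≤ 1) :
    gpow N s f ≤ (N : ℝ)⁻¹ * ∑ x, ‖f x‖ := by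
  induction s generalizing f with
  | zero =>
    simp only [gpow]
    have h1 := norm_avgZ_le f
    have h2 : (N : ℝ)⁻¹ * ∑ x, ‖f x‖ ≤ 1 := avg_const_le _ _ hf
    nlinarith [norm_nonneg (avgZ N f)]
  | succ s ih =>
    simp only [gpow]
    apply avg_const_le
    intro h
    have hb : ∀ x, ‖mder N h f x‖ ≤ ‖f x‖ := by
      intro x
      simp only [mder, norm_mul, RCLike.norm_conj]
      exact mul_le_of_le_one_left (norm_nonneg _) (hf _)
    refine (ih _ fun x => (hb x).trans (hf x)).trans ?_
    exact mul_le_mul_of_nonneg_left (Finset.sum_le_sum fun x _ => hb x) (by positivity)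

lemma gpow_le_L1_of_bdd (s : ℕ) (f : ZMod N → ℂ) (B : ℝ) (hB : 1 ≤ B) (hf : ∀ x, ‖f x‖ ≤ B) :
    gpow N s f ≤ B ^ (2 ^ (s + 1)) * ((N : ℝ)⁻¹ * ∑ x, ‖f x‖) := by
  have hB0 : 0 < B := by linarith
  have e : f = fun x => (B : ℂ) * ((B : ℂ)⁻¹ * f x) := by
    funext x
    have : (B : ℂ) ≠ 0 := by exact_mod_cast hB0.ne'
    field_simp
  have hn : ∀ x, ‖(B : ℂ)⁻¹ * f x‖ = B⁻¹ * ‖f x‖ := by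
    intro x
    rw [norm_mul, norm_inv, Complex.norm_real, Real.norm_of_nonneg hB0.le]
  conv_lhs => rw [e]
  rw [gpow_smul, Complex.norm_real, Real.norm_of_nonneg hB0.le]
  apply mul_le_mul_of_nonneg_left _ (by positivity)
  refine (gpow_le_L1 s _ ?_).trans ?_
  · intro x
    rw [hn, inv_mul_le_iff₀ hB0]
    simpa using hf x
  · apply mul_le_mul_of_nonneg_left _ (by positivity)
    apply Finset.sum_le_sum
    intro x _
    rw [hn]
    exact mul_le_of_le_one_left (norm_nonneg _) (inv_le_one_of_one_le₀ hB)

lemma dpow_self (s : ℕ) (f : ZMod N → ℂ) : dpow N s f f = (gpow N s f : ℂ) := by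
  induction s generalizing f with
  | zero =>
    simp only [dpow, gpow, Complex.mul_conj, Complex.normSq_eq_norm_sq]
  | succ s ih =>
    simp only [dpow, gpow, ih]
    push_cast
    rfl

lemma cross_q (s : ℕ) (f g : ZMod N → ℂ) :
    (N : ℂ)⁻¹ * ∑ h, qpow N s (fun x => f (x + h) * (starRingEnd ℂ) (g x)) = dpow N s f g := by
  induction s generalizing f g with
  | zero =>
    simp only [qpow, dpow, avgZ]
    rw [← Finset.mul_sum, Finset.sum_comm]
    have : ∀ y, ∑ x, f (y + x) * (starRingEnd ℂ) (g y) = (∑ x, f x) * (starRingEnd ℂ) (g y) := by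
      intro y
      rw [← Finset.sum_mul]
      congr 1
      exact Fintype.sum_equiv (Equiv.addLeft y) _ _ (fun x => rfl)
    simp only [this]
    rw [← Finset.mul_sum, map_mul, map_sum]
    simp only [map_inv₀, map_natCast]
    ring
  | succ s ih =>
    simp only [qpow, dpow]
    simp only [← ih]
    rw [← Finset.mul_sum, ← Finset.mul_sum, Finset.sum_comm]
    congr 3
    funext k
    congr 1
    funext h
    congr 1
    funext x
    simp only [mder, map_mul, Complex.conj_conj]
    rw [add_right_comm]
    ring

lemma qpow_succ (s : ℕ) (f : ZMod N → ℂ) : qpow N (s + 1) f = (gpow N s f : ℂ) := by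
  rw [← dpow_self, ← cross_q]
  rfl

lemma cross_g (s : ℕ) (f g : ZMod N → ℂ) :
    (((N : ℝ)⁻¹ * ∑ h, gpow N s (fun x => f (x + h) * (starRingEnd ℂ) (g x)) : ℝ) : ℂ)
      = dpow N (s + 1) f g := by
  rw [← cross_q]
  simp only [qpow_succ]
  push_cast
  rfl

lemma norm_dpow_le (s : ℕ) (f g : ZMod N → ℂ) :
    ‖dpow N s f g‖ ≤ (gpow N s f + gpow N s g) / 2 := by
  induction s generalizing f g with
  | zero =>
    simp only [dpow, gpow, norm_mul, RCLike.norm_conj]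
    nlinarith [sq_nonneg (‖avgZ N f‖ - ‖avgZ N g‖)]
  | succ s ih =>
    simp only [dpow, gpow]
    rw [norm_mul, norm_inv, Complex.norm_natCast, ← mul_add, ← Finset.sum_add_distrib, mul_div_assoc,
      Finset.sum_div]
    apply mul_le_mul_of_nonneg_left _ (by positivity)
    exact (norm_sum_le _ _).trans (Finset.sum_le_sum fun h _ => ih _ _)

lemma cross_le (s : ℕ) (f g : ZMod N → ℂ) :
    (N : ℝ)⁻¹ * ∑ h, gpow N s (fun x => f (x + h) * (starRingEnd ℂ) (g x))
      ≤ (gpow N (s + 1) f + gpow N (s + 1) g) / 2 := by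
  have h1 := norm_dpow_le (s + 1) f g
  rw [← cross_g, Complex.norm_real] at h1
  exact (le_abs_self _).trans h1

/-- constants of the quasi triangle inequality -/
def qc : ℕ → ℝ
  | 0 => 2
  | s + 1 => 2 * qc s ^ 2

lemma qc_pos (s : ℕ) : 0 < qc s := by
  induction s with
  | zero => norm_num [qc]
  | succ s ih => simp only [qc]; positivity

lemma gpow_add_le (s : ℕ) (f g : ZMod N → ℂ) :
    gpow N s (fun x => f x + g x) ≤ qc s * (gpow N s f + gpow N s g) := by
  induction s generalizing f g with
  | zero =>
    simp only [gpow, qc]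
    have : avgZ N (fun x => f x + g x) = avgZ N f + avgZ N g := by
      simp only [avgZ, Finset.sum_add_distrib, mul_add]
    rw [this]
    have h1 := norm_add_le (avgZ N f) (avgZ N g)
    have h2 := norm_nonneg (avgZ N f + avgZ N g)
    nlinarith [sq_nonneg (‖avgZ N f‖ - ‖avgZ N g‖)]
  | succ s ih =>
    have hq := qc_pos s
    have key : ∀ h, gpow N s (mder N h (fun x => f x + g x)) ≤
        qc s ^ 2 * (gpow N s (mder N h f) + gpow N s (mder N h g)
          + gpow N s (fun x => f (x + h) * (starRingEnd ℂ) (g x))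
          + gpow N s (fun x => g (x + h) * (starRingEnd ℂ) (f x))) := by
      intro h
      have e : mder N h (fun x => f x + g x) = fun x => (mder N h f x + mder N h g x) +
          (f (x + h) * (starRingEnd ℂ) (g x) + g (x + h) * (starRingEnd ℂ) (f x)) := by
        funext x; simp only [mder, map_add]; ring
      rw [e]
      have h1 := ih (fun x => mder N h f x + mder N h g x)
        (fun x => f (x + h) * (starRingEnd ℂ) (g x) + g (x + h) * (starRingEnd ℂ) (f x))
      have h2 := ih (mder N h f) (mder N h g)
      have h3 := ih (fun x => f (x + h) * (starRingEnd ℂ) (g x))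
        (fun x => g (x + h) * (starRingEnd ℂ) (f x))
      refine h1.trans ?_
      have := mul_le_mul_of_nonneg_left (add_le_add h2 h3) hq.le
      refine this.trans (le_of_eq ?_)
      ring
    have c1 := cross_le s f g
    have c2 := cross_le s g f
    have : gpow N (s + 1) (fun x => f x + g x) ≤ (N : ℝ)⁻¹ * ∑ h,
        qc s ^ 2 * (gpow N s (mder N h f) + gpow N s (mder N h g)
          + gpow N s (fun x => f (x + h) * (starRingEnd ℂ) (g x))
          + gpow N s (fun x => g (x + h) * (starRingEnd ℂ) (f x))) := by
      simp only [gpow]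
      exact mul_le_mul_of_nonneg_left (Finset.sum_le_sum fun h _ => key h) (by positivity)
    refine this.trans ?_
    rw [← Finset.mul_sum, mul_left_comm]
    simp only [Finset.sum_add_distrib, mul_add]
    rw [show qc (s + 1) = 2 * qc s ^ 2 from rfl]
    have e1 : gpow N (s + 1) f = (N : ℝ)⁻¹ * ∑ h, gpow N s (mder N h f) := rfl
    have e2 : gpow N (s + 1) g = (N : ℝ)⁻¹ * ∑ h, gpow N s (mder N h g) := rfl
    rw [← e1, ← e2]
    have hq2 : 0 ≤ qc s ^ 2 := by positivity
    nlinarith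

lemma gpow_zero_fun (s : ℕ) : gpow N s (fun _ => 0) = 0 := by
  have := gpow_smul s (0 : ℂ) (fun _ : ZMod N => (0 : ℂ))
  simpa using this

/-- monotonicity: `U^1` is controlled by `U^2`. -/
lemma gpow_zero_sq_le (f : ZMod N → ℂ) : gpow N 0 f ^ 2 ≤ gpow N 1 f := by
  have h1 : (gpow N 0 f : ℂ) = (N : ℂ)⁻¹ * ∑ h, avgZ N (mder N h f) := by
    rw [← qpow_succ]; rfl
  have h2 : gpow N 0 f ≤ (N : ℝ)⁻¹ * ∑ h, ‖avgZ N (mder N h f)‖ := by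
    have := congrArg norm h1
    rw [Complex.norm_real, Real.norm_of_nonneg (gpow_nonneg _ _), norm_mul, norm_inv,
      Complex.norm_natCast] at this
    rw [this]
    exact mul_le_mul_of_nonneg_left (norm_sum_le _ _) (by positivity)
  have hN : (0 : ℝ) < N := cast_card_pos
  have h3 : (∑ h : ZMod N, ‖avgZ N (mder N h f)‖) ^ 2 ≤ N * ∑ h, ‖avgZ N (mder N h f)‖ ^ 2 := by
    have := sq_sum_le_card_mul_sum_sq (s := (Finset.univ : Finset (ZMod N)))
      (f := fun h => ‖avgZ N (mder N h f)‖)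
    simpa [ZMod.card] using this
  calc gpow N 0 f ^ 2 ≤ ((N : ℝ)⁻¹ * ∑ h, ‖avgZ N (mder N h f)‖) ^ 2 :=
        pow_le_pow_left₀ (gpow_nonneg _ _) h2 2
    _ = (N : ℝ)⁻¹ ^ 2 * (∑ h, ‖avgZ N (mder N h f)‖) ^ 2 := by ring
    _ ≤ (N : ℝ)⁻¹ ^ 2 * (N * ∑ h, ‖avgZ N (mder N h f)‖ ^ 2) :=
        mul_le_mul_of_nonneg_left h3 (by positivity)
    _ = gpow N 1 f := by
        simp only [gpow]
        field_simp

lemma sum_val {M : Type*} [AddCommMonoid M] (g : ℕ → M) :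
    ∑ x : ZMod N, g x.val = ∑ n ∈ Finset.range N, g n := by
  refine Finset.sum_bij' (fun x _ => x.val) (fun n _ => (n : ZMod N)) ?_ ?_ ?_ ?_ ?_
  · intro x _; simpa using ZMod.val_lt x
  · intro x _; simp
  · intro x _; simp
  · intro n hn; exact ZMod.val_cast_of_lt (by simpa using hn)
  · intro x _; rfl

lemma gowersNorm_nonneg (L s : ℕ) (a : ℕ → ℂ) : 0 ≤ gowersNorm L (s + 1) a := by
  induction s generalizing a with
  | zero => simp only [gowersNorm]; positivity
  | succ s ih =>
    simp only [gowersNorm]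
    refine Real.rpow_nonneg (mul_nonneg (by positivity) (Finset.sum_nonneg fun h _ => ?_)) _
    exact pow_nonneg (ih _) _

lemma gowersNorm_pow (s : ℕ) (a : ℕ → ℂ) :
    gowersNorm N (s + 1) a ^ (2 ^ (s + 1)) = gpow N s (fun x => a x.val) := by
  induction s generalizing a with
  | zero =>
    simp only [gowersNorm, gpow, avgZ]
    rw [sum_val (N := N) (M := ℂ) (fun n => a n)]
    have e : ∑ m ∈ Finset.range N, a (m % N) = ∑ m ∈ Finset.range N, a m :=
      Finset.sum_congr rfl fun m hm => by rw [Nat.mod_eq_of_lt (by simpa using hm)]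
    rw [e]
    norm_num
  | succ s ih =>
    have hnn : 0 ≤ (N : ℝ)⁻¹ * ∑ h ∈ Finset.range N, gowersNorm N (s + 1)
          (fun n => a ((n + h) % N) * (starRingEnd ℂ) (a (n % N))) ^ (2 ^ (s + 1)) :=
      mul_nonneg (by positivity)
        (Finset.sum_nonneg fun h _ => pow_nonneg (gowersNorm_nonneg _ _ _) _)
    have : gowersNorm N (s + 1 + 1) a ^ (2 ^ (s + 1 + 1)) =
        (N : ℝ)⁻¹ * ∑ h ∈ Finset.range N, gowersNorm N (s + 1)
          (fun n => a ((n + h) % N) * (starRingEnd ℂ) (a (n % N))) ^ (2 ^ (s + 1)) := by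
      simp only [gowersNorm]
      rw [← Real.rpow_natCast, ← Real.rpow_mul hnn]
      push_cast
      rw [inv_mul_cancel₀ (by positivity), Real.rpow_one]
    rw [this]
    simp only [ih, gpow]
    rw [← sum_val (N := N) (M := ℝ) (fun h => gpow N s
      (fun x : ZMod N => a ((x.val + h) % N) * (starRingEnd ℂ) (a (x.val % N))))]
    congr 2
    funext h
    congr 1
    funext x
    simp only [mder]
    rw [ZMod.val_add, Nat.mod_eq_of_lt (ZMod.val_lt x)]

/-- `exp (i x)` -/
def ex (x : ℝ) : ℂ := Complex.exp (Complex.I * x)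

lemma norm_ex (x : ℝ) : ‖ex x‖ = 1 := Complex.norm_exp_I_mul_ofReal x

lemma ex_add (x y : ℝ) : ex (x + y) = ex x * ex y := by
  simp only [ex, Complex.ofReal_add, mul_add, Complex.exp_add]

lemma conj_ex (x : ℝ) : (starRingEnd ℂ) (ex x) = ex (-x) := by
  simp only [ex, ← Complex.exp_conj, map_mul, Complex.conj_I, Complex.conj_ofReal,
    Complex.ofReal_neg]
  congr 1; ring

lemma ex_sub_one_ge (x : ℝ) (h0 : 0 ≤ x) (h1 : x ≤ 1) : x / 2 ≤ ‖ex x - 1‖ := by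
  unfold ex
  rw [Complex.norm_exp_I_mul_ofReal_sub_one]
  have hpi := Real.pi_gt_three
  have hpi4 := Real.pi_le_four
  have := Real.mul_le_sin (x := x / 2) (by linarith) (by linarith)
  have h2 : (1 : ℝ) / 2 ≤ 2 / Real.pi := by
    rw [div_le_div_iff₀ (by norm_num) (by linarith)]; linarith
  have h3 : 1 / 2 * (x / 2) ≤ 2 / Real.pi * (x / 2) :=
    mul_le_mul_of_nonneg_right h2 (by linarith)
  rw [Real.norm_eq_abs]
  refine le_trans ?_ (le_abs_self _)
  linarith

lemma ex_sub_ex_le (x y : ℝ) : ‖ex x - ex y‖ ≤ |x - y| := by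
  have e : ex x - ex y = ex y * (ex (x - y) - 1) := by
    rw [mul_sub, ← ex_add]; simp
  rw [e, norm_mul, norm_ex, one_mul]
  exact Real.norm_exp_I_mul_ofReal_sub_one_le

lemma kl_core (φ : ℕ → ℝ) (lam : ℝ) (hl : 0 < lam) (M : ℕ)
    (hlo : ∀ n ≤ M, lam ≤ φ (n + 1) - φ n) (hhi : ∀ n ≤ M, φ (n + 1) - φ n ≤ 1)
    (hmono : ∀ n < M, φ (n + 2) - φ (n + 1) ≤ φ (n + 1) - φ n) :
    ‖∑ n ∈ Finset.range (M + 1), ex (φ n) - ex (φ (M + 1)) * (ex (φ (M + 1) - φ M) - 1)⁻¹‖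
      ≤ 4 / (φ (M + 1) - φ M) := by
  have hne : ∀ n ≤ M, ex (φ (n + 1) - φ n) - 1 ≠ 0 := by
    intro n hn h
    have h1 := ex_sub_one_ge _ (hl.le.trans (hlo n hn)) (hhi n hn)
    rw [h, norm_zero] at h1
    linarith [hlo n hn]
  have hz : ∀ n ≤ M, ex (φ n) = (ex (φ (n + 1)) - ex (φ n)) * (ex (φ (n + 1) - φ n) - 1)⁻¹ := by
    intro n hn
    have e : ex (φ (n + 1)) - ex (φ n) = ex (φ n) * (ex (φ (n + 1) - φ n) - 1) := by
      rw [mul_sub, ← ex_add]; simp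
    rw [e, mul_assoc, mul_inv_cancel₀ (hne n hn), mul_one]
  have hw : ∀ n ≤ M, ‖(ex (φ (n + 1) - φ n) - 1)⁻¹‖ ≤ 2 / (φ (n + 1) - φ n) := by
    intro n hn
    have h1 := ex_sub_one_ge _ (hl.le.trans (hlo n hn)) (hhi n hn)
    have h2 : 0 < φ (n + 1) - φ n := lt_of_lt_of_le hl (hlo n hn)
    rw [norm_inv]
    calc _ ≤ ((φ (n + 1) - φ n) / 2)⁻¹ := inv_anti₀ (by linarith) h1
      _ = _ := by rw [inv_div]
  induction M with
  | zero =>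
    have h2 : 0 < φ (0 + 1) - φ 0 := lt_of_lt_of_le hl (hlo 0 le_rfl)
    have e : ∑ n ∈ Finset.range (0 + 1), ex (φ n) -
        ex (φ (0 + 1)) * (ex (φ (0 + 1) - φ 0) - 1)⁻¹ =
        - (ex (φ 0) * (ex (φ (0 + 1) - φ 0) - 1)⁻¹) := by
      rw [zero_add, Finset.sum_range_one]
      have := hz 0 le_rfl
      rw [zero_add] at this
      conv_lhs => lhs; rw [this]
      ring
    rw [e, norm_neg, norm_mul, norm_ex, one_mul]
    refine (hw 0 le_rfl).trans ?_
    gcongr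
    norm_num
  | succ M ih =>
    have ih' := ih (fun n hn => hlo n (by omega)) (fun n hn => hhi n (by omega))
      (fun n hn => hmono n (by omega)) (fun n hn => hne n (by omega))
      (fun n hn => hz n (by omega)) (fun n hn => hw n (by omega))
    set p := φ (M + 1) - φ M with hp
    set q := φ (M + 1 + 1) - φ (M + 1) with hq
    have hp0 : 0 < p := lt_of_lt_of_le hl (hlo M (by omega))
    have hq0 : 0 < q := lt_of_lt_of_le hl (hlo (M + 1) le_rfl)
    have hqp : q ≤ p := hmono M (by omega)
    have hneM := hne M (by omega)
    have hneM1 := hne (M + 1) le_rfl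
    rw [← hp] at hneM
    rw [← hq] at hneM1
    have e : ∑ n ∈ Finset.range (M + 1 + 1), ex (φ n) - ex (φ (M + 1 + 1)) * (ex q - 1)⁻¹ =
        (∑ n ∈ Finset.range (M + 1), ex (φ n) - ex (φ (M + 1)) * (ex p - 1)⁻¹) +
        ex (φ (M + 1)) * ((ex p - 1)⁻¹ - (ex q - 1)⁻¹) := by
      rw [Finset.sum_range_succ]
      have := hz (M + 1) le_rfl
      rw [← hq] at this
      linear_combination this
    have hd : ‖(ex p - 1)⁻¹ - (ex q - 1)⁻¹‖ ≤ 4 / q - 4 / p := by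
      rw [inv_sub_inv hneM hneM1, norm_div, norm_mul]
      have h1 := ex_sub_one_ge p hp0.le (hhi M (by omega))
      have h2 := ex_sub_one_ge q hq0.le (hhi (M + 1) le_rfl)
      have h3 : ‖ex q - 1 - (ex p - 1)‖ ≤ p - q := by
        have := ex_sub_ex_le q p
        rw [abs_sub_comm, abs_of_nonneg (by linarith)] at this
        convert this using 2
        ring
      calc _ ≤ (p - q) / ((p / 2) * (q / 2)) := by
            apply div_le_div₀ (by linarith) h3 (by positivity)
            exact mul_le_mul h1 h2 (by positivity) (norm_nonneg _)
        _ = _ := by field_simp; ring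
    rw [e]
    refine (norm_add_le _ _).trans ?_
    rw [norm_mul, norm_ex, one_mul]
    linarith

lemma kl_pos (φ : ℕ → ℝ) (lam : ℝ) (hl : 0 < lam) (L : ℕ)
    (hlo : ∀ n, n + 1 < L → lam ≤ φ (n + 1) - φ n) (hhi : ∀ n, n + 1 < L → φ (n + 1) - φ n ≤ 1)
    (hmono : ∀ n, n + 2 < L → φ (n + 2) - φ (n + 1) ≤ φ (n + 1) - φ n) :
    ‖∑ n ∈ Finset.range L, ex (φ n)‖ ≤ 6 / lam + 1 := by
  have h6 : 0 < 6 / lam := by positivity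
  match L with
  | 0 => simp; linarith
  | 1 => simp [norm_ex]; linarith
  | M + 2 =>
    have h1 := kl_core φ lam hl M (fun n hn => hlo n (by omega)) (fun n hn => hhi n (by omega))
      (fun n hn => hmono n (by omega))
    have hlM := hlo M (by omega)
    have h2 := ex_sub_one_ge _ (hl.le.trans hlM) (hhi M (by omega))
    have h3 : ‖ex (φ (M + 1)) * (ex (φ (M + 1) - φ M) - 1)⁻¹‖ ≤ 2 / lam := by
      rw [norm_mul, norm_ex, one_mul, norm_inv]
      calc _ ≤ (lam / 2)⁻¹ := inv_anti₀ (by linarith) (by linarith)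
        _ = _ := by rw [inv_div]
    have h4 : 4 / (φ (M + 1) - φ M) ≤ 4 / lam := by gcongr
    rw [Finset.sum_range_succ]
    refine (norm_add_le _ _).trans ?_
    rw [norm_ex]
    have h5 := norm_le_norm_sub_add (∑ n ∈ Finset.range (M + 1), ex (φ n))
      (ex (φ (M + 1)) * (ex (φ (M + 1) - φ M) - 1)⁻¹)
    have : 6 / lam = 4 / lam + 2 / lam := by ring
    linarith

lemma norm_sum_ex_neg (φ : ℕ → ℝ) (L : ℕ) :
    ‖∑ n ∈ Finset.range L, ex (-φ n)‖ = ‖∑ n ∈ Finset.range L, ex (φ n)‖ := by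
  rw [← RCLike.norm_conj (∑ n ∈ Finset.range L, ex (φ n)), map_sum]
  simp only [conj_ex]

/-- iterated unit forward differences -/
def dif : ℕ → (ℤ → ℝ) → ℤ → ℝ
  | 0, φ => φ
  | i + 1, φ => fun n => dif i φ (n + 1) - dif i φ n

lemma dif_shift (i : ℕ) (φ : ℤ → ℝ) (d n : ℤ) :
    dif i (fun k => φ (k + d)) n = dif i φ (n + d) := by
  induction i generalizing n with
  | zero => rfl
  | succ i ih => simp only [dif, ih]; rw [add_right_comm]

lemma dif_sub (i : ℕ) (φ ψ : ℤ → ℝ) (n : ℤ) :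
    dif i (fun k => φ k - ψ k) n = dif i φ n - dif i ψ n := by
  induction i generalizing n with
  | zero => rfl
  | succ i ih => simp only [dif, ih]; ring

lemma dif_opp (i : ℕ) (φ : ℤ → ℝ) (n : ℤ) :
    dif i (fun k => - φ k) n = - dif i φ n := by
  induction i generalizing n with
  | zero => rfl
  | succ i ih => simp only [dif, ih]; ring

lemma dif_add_const (i : ℕ) (φ : ℤ → ℝ) (c : ℝ) (n : ℤ) :
    dif (i + 1) (fun k => φ k + c) n = dif (i + 1) φ n := by
  induction i generalizing n with
  | zero => simp only [dif]; ring
  | succ i ih =>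
    change dif (i + 1) _ (n + 1) - dif (i + 1) _ n = _
    rw [ih, ih]; rfl

lemma dif_telescope (i : ℕ) (φ : ℤ → ℝ) (n : ℤ) (h : ℕ) :
    dif i φ (n + h) - dif i φ n = ∑ j ∈ Finset.range h, dif (i + 1) φ (n + j) := by
  induction h with
  | zero => simp
  | succ h ih =>
    rw [Finset.sum_range_succ, ← ih]
    simp only [dif]
    push_cast
    rw [← add_assoc]
    ring

/-- The class of admissible phases. -/
structure Adm (N : ℕ) (r : ℕ) (c σ : ℝ) (A B : ℤ) (φ : ℤ → ℝ) : Prop where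
  sgn : σ = 1 ∨ σ = -1
  lo : ∀ i ≤ r, ∀ n, A ≤ n → n + i + 1 < B →
    c / (√N * (N : ℝ) ^ i) ≤ σ * (-1) ^ i * dif (i + 1) φ n
  hi : ∀ n, A ≤ n → n + 1 < B → |dif 1 φ n| ≤ 1

lemma Adm.add_const {M r : ℕ} {c σ : ℝ} {A B : ℤ} {φ : ℤ → ℝ} (H : Adm M r c σ A B φ) (t : ℝ) :
    Adm M r c σ A B (fun n => φ n + t) := by
  refine ⟨H.sgn, ?_, ?_⟩
  · intro i hi n hA hB
    rw [dif_add_const]; exact H.lo i hi n hA hB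
  · intro n hA hB
    rw [dif_add_const]; exact H.hi n hA hB

lemma Adm.mono {M r r' : ℕ} {c c' σ : ℝ} {A B : ℤ} {φ : ℤ → ℝ} (H : Adm M r c σ A B φ)
    (hc : c' ≤ c) (hr : r' ≤ r) : Adm M r' c' σ A B φ := by
  refine ⟨H.sgn, ?_, H.hi⟩
  intro i hi n hA hB
  refine le_trans ?_ (H.lo i (hi.trans hr) n hA hB)
  gcongr

lemma Adm.step {M r : ℕ} (hM : 0 < M) {c σ : ℝ} (hc : 0 ≤ c) {A B : ℤ} {φ : ℤ → ℝ}
    (H : Adm M (r + 1) c σ A B φ)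
    (h : ℕ) : Adm M r (c * (h / M)) (-σ) A (B - h) (fun n => φ (n + h) - φ n) := by
  have hM' : (0 : ℝ) < M := by exact_mod_cast hM
  refine ⟨by rcases H.sgn with h | h <;> simp [h], ?_, ?_⟩
  · intro i hi n hA hB
    rw [dif_sub, dif_shift, dif_telescope, Finset.mul_sum]
    have : ∀ j ∈ Finset.range h, c / (√M * (M : ℝ) ^ (i + 1)) ≤
        -σ * (-1) ^ i * dif (i + 1 + 1) φ (n + j) := by
      intro j hj
      have hj' : j < h := by simpa using hj
      have := H.lo (i + 1) (by omega) (n + j) (by omega) (by push_cast; omega)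
      refine this.trans (le_of_eq ?_)
      ring
    have h2 := Finset.sum_le_sum this
    rw [Finset.sum_const, Finset.card_range, nsmul_eq_mul] at h2
    refine le_trans (le_of_eq ?_) h2
    have : 0 < √(M : ℝ) := Real.sqrt_pos.2 hM'
    field_simp
    ring
  · intro n hA hB
    rw [dif_sub, dif_shift]
    have a1 := H.lo 0 (by omega) n (by omega) (by push_cast; omega)
    have a2 := H.lo 0 (by omega) (n + h) (by omega) (by push_cast; omega)
    have b1 := H.hi n (by omega) (by omega)
    have b2 := H.hi (n + h) (by omega) (by omega)
    have hz : 0 ≤ c / (√M * (M : ℝ) ^ 0) := by positivity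
    simp only [zero_add, pow_zero, mul_one] at a1 a2 hz
    rw [abs_le] at b1 b2 ⊢
    rcases H.sgn with h | h <;> rw [h] at a1 a2 <;> constructor <;> linarith

lemma Adm.step_neg {M r : ℕ} (hM : 0 < M) {c σ : ℝ} (hc : 0 ≤ c) {A B : ℤ} {φ : ℤ → ℝ}
    (H : Adm M (r + 1) c σ A B φ)
    (h : ℕ) : Adm M r (c * (h / M)) σ (A + h) B (fun n => φ (n - h) - φ n) := by
  have S := H.step hM hc h
  have e : (fun n : ℤ => φ (n - h) - φ n) =
      fun n => - ((fun k => (fun n : ℤ => φ (n + h) - φ n) (k + (-h))) n) := by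
    funext n; simp [sub_eq_add_neg]
  refine ⟨H.sgn, ?_, ?_⟩
  · intro i hi n hA hB
    have := S.lo i hi (n - h) (by omega) (by omega)
    rw [e, dif_opp, dif_shift _ (fun n : ℤ => φ (n + h) - φ n)]
    rw [sub_eq_add_neg] at this
    linarith
  · intro n hA hB
    have := S.hi (n - h) (by omega) (by omega)
    rw [e, dif_opp, dif_shift _ (fun n : ℤ => φ (n + h) - φ n), abs_neg]
    rwa [sub_eq_add_neg] at this

/-- phase function on an interval -/
def ph (N : ℕ) (A B : ℤ) (φ : ℤ → ℝ) : ZMod N → ℂ :=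
  fun x => if A ≤ (x.val : ℤ) ∧ (x.val : ℤ) < B then ex (φ x.val) else 0

lemma norm_ph_le {N : ℕ} (A B : ℤ) (φ : ℤ → ℝ) (x : ZMod N) : ‖ph N A B φ x‖ ≤ 1 := by
  unfold ph
  split_ifs
  · rw [norm_ex]
  · simp

lemma gpow_ph_le_one (s : ℕ) (A B : ℤ) (φ : ℤ → ℝ) : gpow N s (ph N A B φ) ≤ 1 :=
  (gpow_le_L1 s _ (norm_ph_le A B φ)).trans (avg_const_le _ _ (norm_ph_le A B φ))

lemma mder_ph_pos (A B : ℤ) (φ : ℤ → ℝ) (hA : 0 ≤ A) (hB : B ≤ N) (hAB : 2 * (B - A) ≤ N + 1)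
    (h : ZMod N) (hh : 2 * h.val ≤ N) :
    mder N h (ph N A B φ) = ph N A (B - h.val) (fun n => φ (n + h.val) - φ n) := by
  funext x
  simp only [mder, ph]
  have hx := ZMod.val_lt x
  have hxh : ((x + h).val : ℤ) = x.val + h.val ∨ ((x + h).val : ℤ) = x.val + h.val - N := by
    rw [ZMod.val_add]
    rcases lt_or_ge (x.val + h.val) N with hl | hl
    · left; rw [Nat.mod_eq_of_lt hl]; push_cast; rfl
    · right
      have := ZMod.val_lt h
      rw [Nat.mod_eq_sub_mod hl, Nat.mod_eq_of_lt (by omega)]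
      omega
  by_cases c1 : A ≤ (x.val : ℤ) ∧ (x.val : ℤ) < B
  · rcases hxh with e | e
    · by_cases c2 : (x.val : ℤ) < B - h.val
      · rw [if_pos (by omega), if_pos c1, if_pos (by omega), e, conj_ex, ← ex_add]
        rfl
      · rw [if_neg (by omega), zero_mul, if_neg (by omega)]
    · rw [if_neg (by omega), zero_mul, if_neg (by omega)]
  · rw [if_neg c1, map_zero, mul_zero, if_neg (by omega)]

lemma mder_ph_neg (A B : ℤ) (φ : ℤ → ℝ) (hA : 0 ≤ A) (hB : B ≤ N) (hAB : 2 * (B - A) ≤ N + 1)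
    (h : ZMod N) (hh : N < 2 * h.val) :
    mder N h (ph N A B φ) =
      ph N (A + (N - h.val : ℕ)) B (fun n => φ (n - (N - h.val : ℕ)) - φ n) := by
  funext x
  simp only [mder, ph]
  have hx := ZMod.val_lt x
  have hhv := ZMod.val_lt h
  have hxhv := ZMod.val_lt (x + h)
  have hxh : ((x + h).val : ℤ) = x.val + h.val ∨ ((x + h).val : ℤ) = x.val - (N - h.val : ℕ) := by
    rw [ZMod.val_add]
    rcases lt_or_ge (x.val + h.val) N with hl | hl
    · left; rw [Nat.mod_eq_of_lt hl]; push_cast; rfl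
    · right
      rw [Nat.mod_eq_sub_mod hl, Nat.mod_eq_of_lt (by omega)]
      omega
  by_cases c1 : A ≤ (x.val : ℤ) ∧ (x.val : ℤ) < B
  · rcases hxh with e | e
    · rw [if_neg (by omega), zero_mul, if_neg (by omega)]
    · by_cases c2 : A + (N - h.val : ℕ) ≤ (x.val : ℤ)
      · rw [if_pos (by omega), if_pos c1, if_pos (by omega), e, conj_ex, ← ex_add]
        rfl
      · rw [if_neg (by omega), zero_mul, if_neg (by omega)]
  · rw [if_neg c1, map_zero, mul_zero, if_neg (by omega)]

lemma sum_ph (a : ℕ) (B : ℤ) (hB : B ≤ N) (φ : ℤ → ℝ) :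
    ∑ x, ph N a B φ x = ∑ j ∈ Finset.range (B - a).toNat, ex (φ (a + j)) := by
  have h1 : ∑ x, ph N a B φ x = ∑ n ∈ Finset.range N,
      if (a : ℤ) ≤ (n : ℤ) ∧ (n : ℤ) < B then ex (φ n) else 0 := by
    rw [← sum_val (N := N) (M := ℂ)]
    rfl
  rw [h1, ← Finset.sum_filter]
  have h2 : (Finset.range N).filter (fun n : ℕ => (a : ℤ) ≤ (n : ℤ) ∧ (n : ℤ) < B) =
      Finset.Ico a (a + (B - a).toNat) := by
    ext n
    simp only [Finset.mem_filter, Finset.mem_range, Finset.mem_Ico]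
    omega
  rw [h2, Finset.sum_Ico_eq_sum_range, Nat.add_sub_cancel_left]
  refine Finset.sum_congr rfl fun j _ => ?_
  push_cast
  rfl

lemma norm_sum_ph_le (c σ : ℝ) (hc : 0 < c) (A B : ℤ) (hA : 0 ≤ A) (hB : B ≤ N) (φ : ℤ → ℝ)
    (H : Adm N 1 c σ A B φ) : ‖∑ x, ph N A B φ x‖ ≤ 6 / (c / √N) + 1 := by
  obtain ⟨a, rfl⟩ := Int.eq_ofNat_of_zero_le hA
  rw [sum_ph a B hB]
  have hN : (0 : ℝ) < N := cast_card_pos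
  have hlam : 0 < c / √N := div_pos hc (Real.sqrt_pos.2 hN)
  have hlo : ∀ n : ℕ, n + 1 < (B - a).toNat → c / √N ≤ σ * (φ (a + (n + 1 : ℕ)) - φ (a + n)) := by
    intro n hn
    have := H.lo 0 (by omega) (a + n) (by omega) (by push_cast; omega)
    simp only [dif, pow_zero, mul_one] at this
    push_cast
    rwa [← add_assoc]
  have hhi : ∀ n : ℕ, n + 1 < (B - a).toNat → |φ (a + (n + 1 : ℕ)) - φ (a + n)| ≤ 1 := by
    intro n hn
    have := H.hi (a + n) (by omega) (by omega)
    simp only [dif] at this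
    push_cast
    rwa [← add_assoc]
  have hmono : ∀ n : ℕ, n + 2 < (B - a).toNat → σ * (φ (a + (n + 2 : ℕ)) - φ (a + (n + 1 : ℕ)))
      ≤ σ * (φ (a + (n + 1 : ℕ)) - φ (a + n)) := by
    intro n hn
    have := H.lo 1 (by omega) (a + n) (by omega) (by push_cast; omega)
    have h0 : 0 ≤ c / (√N * (N : ℝ) ^ 1) := by positivity
    simp only [dif, pow_one] at this h0
    push_cast
    have e : (a : ℤ) + (n + 2) = a + n + 1 + 1 := by ring
    rw [e, ← add_assoc]
    linarith
  rcases H.sgn with h | h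
  · subst h
    refine kl_pos (fun j : ℕ => φ (a + j)) (c / √N) hlam _ ?_ ?_ ?_
    · intro n hn; simpa using hlo n hn
    · intro n hn; exact (le_abs_self _).trans (hhi n hn)
    · intro n hn; simpa using hmono n hn
  · subst h
    rw [← norm_sum_ex_neg (fun j : ℕ => φ (a + j))]
    refine kl_pos (fun j : ℕ => -φ (a + j)) (c / √N) hlam _ ?_ ?_ ?_
    · intro n hn; have := hlo n hn; linarith
    · intro n hn
      have := (neg_le_abs _).trans (hhi n hn)
      linarith
    · intro n hn; have := hmono n hn; linarith

/-- uniform smallness of admissible phases -/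
def UnifSmall (s : ℕ) : Prop :=
  ∀ c > (0 : ℝ), ∀ ε > (0 : ℝ), ∃ N0 : ℕ, ∀ N ≥ N0, ∀ [NeZero N], ∀ (A B : ℤ) (σ : ℝ) (φ : ℤ → ℝ),
    0 ≤ A → B ≤ N → 2 * (B - A) ≤ N + 1 → Adm N (s + 1) c σ A B φ → gpow N s (ph N A B φ) ≤ ε

lemma unifSmall_zero : UnifSmall 0 := by
  intro c hc ε hε
  obtain ⟨N0, hN0⟩ := exists_nat_ge ((6 / c + 1) ^ 2 / ε)
  refine ⟨N0, ?_⟩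
  intro N hNN _ A B σ φ hA hB hAB H
  have hN : (0 : ℝ) < N := cast_card_pos
  have hN1 : (1 : ℝ) ≤ N := by
    have := NeZero.ne N
    exact_mod_cast Nat.one_le_iff_ne_zero.2 this
  have hs : 1 ≤ √(N : ℝ) := by rwa [Real.one_le_sqrt]
  have hss : √(N : ℝ) ^ 2 = N := Real.sq_sqrt hN.le
  have h1 := norm_sum_ph_le c σ hc A B hA hB φ H
  have h2 : 6 / (c / √N) + 1 ≤ (6 / c + 1) * √N := by
    have : 6 / (c / √N) = 6 / c * √N := by field_simp
    rw [this]; linarith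
  have h3 : ‖avgZ N (ph N A B φ)‖ ≤ (6 / c + 1) * √N / N := by
    unfold avgZ
    rw [norm_mul, norm_inv, Complex.norm_natCast, inv_mul_eq_div]
    gcongr
    exact h1.trans h2
  simp only [gpow]
  calc _ ≤ ((6 / c + 1) * √N / N) ^ 2 := pow_le_pow_left₀ (norm_nonneg _) h3 2
    _ = (6 / c + 1) ^ 2 / N := by
        rw [div_pow, mul_pow, hss]; field_simp
    _ ≤ ε := by
        have : (N0 : ℝ) ≤ N := by exact_mod_cast hNN
        rw [div_le_iff₀ hN]
        have := hN0.trans this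
        rw [div_le_iff₀ hε] at this
        linarith

lemma bad_count (K : ℕ) :
    ∑ h : ZMod N, (if h.val < K ∨ N - h.val < K then (1 : ℝ) else 0) ≤ 2 * K := by
  rw [sum_val (N := N) (M := ℝ) (fun n => if n < K ∨ N - n < K then (1 : ℝ) else 0),
    ← Finset.sum_filter, Finset.sum_const, nsmul_eq_mul, mul_one]
  have : (Finset.range N).filter (fun n => n < K ∨ N - n < K) ⊆
      Finset.range K ∪ Finset.Ico (N + 1 - K) (N + 1) := by
    intro n
    simp only [Finset.mem_filter, Finset.mem_range, Finset.mem_union, Finset.mem_Ico]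
    omega
  have h2 := (Finset.card_le_card this).trans (Finset.card_union_le _ _)
  rw [Finset.card_range, Nat.card_Ico] at h2
  have : ((Finset.range N).filter (fun n => n < K ∨ N - n < K)).card ≤ 2 * K := by omega
  exact_mod_cast this

lemma phase_step (s : ℕ) (IH : UnifSmall s) (c : ℝ) (hc : 0 < c) (ε : ℝ) (hε : 0 < ε) :
    ∃ N0 : ℕ, ∀ N ≥ N0, ∀ [NeZero N], ∀ (A B : ℤ) (σ t : ℝ) (φ : ℤ → ℝ),
    0 ≤ A → B ≤ N → 2 * (B - A) ≤ N + 1 → Adm N (s + 2) c σ A B φ →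
      gpow N (s + 1) (ph N A B (fun n => φ n + t * n)) ≤ ε := by
  obtain ⟨N1, hN1⟩ := IH (c * (ε / 8)) (by positivity) (ε / 2) (by positivity)
  obtain ⟨N2, hN2⟩ := exists_nat_ge (8 / ε)
  refine ⟨max N1 N2, ?_⟩
  intro N hNN _ A B σ t φ hA hB hAB H
  have hN : (0 : ℝ) < N := cast_card_pos
  have hNp : 0 < N := Nat.pos_of_ne_zero (NeZero.ne N)
  set K := ⌈ε / 8 * N⌉₊ with hK
  have hK1 : ε / 8 * N ≤ K := Nat.le_ceil _
  have hK2 : (K : ℝ) ≤ ε / 8 * N + 1 := (Nat.ceil_lt_add_one (by positivity)).le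
  have key : ∀ h : ZMod N, gpow N s (mder N h (ph N A B (fun n => φ n + t * n))) ≤
      ε / 2 + (if h.val < K ∨ N - h.val < K then (1 : ℝ) else 0) := by
    intro h
    have hv := ZMod.val_lt h
    rcases le_or_gt (2 * h.val) N with hh | hh
    · rw [mder_ph_pos A B _ hA hB hAB h hh]
      split_ifs with hb
      · have := gpow_ph_le_one (N := N) s A (B - h.val)
          (fun n : ℤ => φ (n + h.val) + t * ((n + h.val : ℤ) : ℝ) - (φ n + t * n))
        linarith
      · rw [add_zero]
        have S := ((H.step hNp hc.le h.val).add_const (t * h.val)).mono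
          (c' := c * (ε / 8)) (r' := s + 1) ?_ le_rfl
        · have e : (fun n : ℤ => φ (n + h.val) + t * ((n + h.val : ℤ) : ℝ) - (φ n + t * n)) =
              fun n : ℤ => φ (n + h.val) - φ n + t * h.val := by
            funext n; push_cast; ring
          rw [e]
          exact hN1 N (le_trans (le_max_left _ _) hNN) _ _ _ _ hA (by omega) (by omega) S
        · apply mul_le_mul_of_nonneg_left _ hc.le
          rw [le_div_iff₀ hN]
          refine hK1.trans ?_
          exact_mod_cast (by omega : K ≤ h.val)
    · rw [mder_ph_neg A B _ hA hB hAB h hh]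
      split_ifs with hb
      · have := gpow_ph_le_one (N := N) s (A + (N - h.val : ℕ)) B
          (fun n : ℤ => φ (n - (N - h.val : ℕ)) + t * ((n - (N - h.val : ℕ) : ℤ) : ℝ)
            - (φ n + t * n))
        linarith
      · rw [add_zero]
        have S := ((H.step_neg hNp hc.le (N - h.val)).add_const (-t * (N - h.val : ℕ))).mono
          (c' := c * (ε / 8)) (r' := s + 1) ?_ le_rfl
        · have e : (fun n : ℤ => φ (n - (N - h.val : ℕ)) + t * ((n - (N - h.val : ℕ) : ℤ) : ℝ)
              - (φ n + t * n)) =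
              fun n : ℤ => φ (n - (N - h.val : ℕ)) - φ n + -t * (N - h.val : ℕ) := by
            funext n; rw [Int.cast_sub, Int.cast_natCast]; ring
          rw [e]
          exact hN1 N (le_trans (le_max_left _ _) hNN) _ _ _ _ (by omega) (by omega) (by omega) S
        · apply mul_le_mul_of_nonneg_left _ hc.le
          rw [le_div_iff₀ hN]
          refine hK1.trans ?_
          exact_mod_cast (by omega : K ≤ N - h.val)
  have h1 : ∑ h : ZMod N, gpow N s (mder N h (ph N A B (fun n => φ n + t * n))) ≤
      N * (ε / 2) + 2 * K := by
    refine (Finset.sum_le_sum fun h _ => key h).trans ?_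
    rw [Finset.sum_add_distrib]
    have := bad_count (N := N) K
    simp only [Finset.sum_const, Finset.card_univ, ZMod.card, nsmul_eq_mul]
    linarith
  simp only [gpow]
  rw [inv_mul_le_iff₀ hN]
  have h2 : 8 / ε ≤ N := hN2.trans (by exact_mod_cast le_trans (le_max_right _ _) hNN)
  rw [div_le_iff₀ hε] at h2
  nlinarith

lemma unifSmall_all (s : ℕ) : UnifSmall s := by
  induction s with
  | zero => exact unifSmall_zero
  | succ s ih =>
    intro c hc ε hε
    obtain ⟨N0, h⟩ := phase_step s ih c hc ε hε
    refine ⟨N0, ?_⟩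
    intro N hN _ A B σ φ hA hB hAB H
    have := h N hN A B σ 0 φ hA hB hAB H
    simpa using this

/-- iterated differences of real functions -/
def rdif : ℕ → (ℝ → ℝ) → ℝ → ℝ
  | 0, g => g
  | i + 1, g => fun x => rdif i g (x + 1) - rdif i g x

lemma rdif_deriv (p : ℝ) (i : ℕ) (x : ℝ) (hx : 0 < x) :
    HasDerivAt (rdif i (fun y => y ^ p)) (p * rdif i (fun y => y ^ (p - 1)) x) x := by
  induction i generalizing x with
  | zero => exact Real.hasDerivAt_rpow_const (Or.inl hx.ne')
  | succ i ih =>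
    have h1 := (ih (x + 1) (by linarith)).comp_add_const x 1
    have h2 := h1.sub (ih x hx)
    have e : p * rdif (i + 1) (fun y => y ^ (p - 1)) x =
      p * rdif i (fun y => y ^ (p - 1)) (x + 1) - p * rdif i (fun y => y ^ (p - 1)) x := by
      simp only [rdif]; ring
    rw [e]
    exact h2

lemma rdif_mvt (p : ℝ) (i : ℕ) (x : ℝ) (hx : 0 < x) :
    ∃ y, x < y ∧ y < x + 1 ∧
      rdif (i + 1) (fun y => y ^ p) x = p * rdif i (fun y => y ^ (p - 1)) y := by
  obtain ⟨y, hy, h⟩ := exists_hasDerivAt_eq_slope (rdif i (fun y => y ^ p))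
    (fun y => p * rdif i (fun y => y ^ (p - 1)) y) (lt_add_one x)
    (fun z hz => (rdif_deriv p i z (by linarith [hz.1])).continuousAt.continuousWithinAt)
    (fun z hz => rdif_deriv p i z (by linarith [hz.1]))
  refine ⟨y, hy.1, hy.2, ?_⟩
  rw [h]
  simp [rdif]

lemma rdif_lower (i : ℕ) : ∀ p < (0 : ℝ), ∃ c > (0 : ℝ), ∀ x > (0 : ℝ),
    c * (x + i) ^ (p - i) ≤ (-1) ^ i * rdif i (fun y => y ^ p) x := by
  induction i with
  | zero =>
    intro p hp
    refine ⟨1, one_pos, fun x hx => ?_⟩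
    simp [rdif]
  | succ i ih =>
    intro p hp
    obtain ⟨c, hc, h⟩ := ih (p - 1) (by linarith)
    refine ⟨-p * c, mul_pos (by linarith) hc, fun x hx => ?_⟩
    obtain ⟨y, hxy, hyx, e⟩ := rdif_mvt p i x hx
    rw [e]
    have h1 := h y (by linarith)
    have h2 : (x + (i + 1 : ℕ)) ^ (p - (i + 1 : ℕ)) ≤ (y + i) ^ (p - 1 - i) := by
      have : p - ((i + 1 : ℕ) : ℝ) = p - 1 - i := by push_cast; ring
      rw [this]
      have hi : (0 : ℝ) ≤ i := by positivity
      apply Real.rpow_le_rpow_of_nonpos (by linarith)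
      · push_cast; linarith
      · linarith
    calc -p * c * (x + (i + 1 : ℕ)) ^ (p - (i + 1 : ℕ)) ≤ -p * c * (y + i) ^ (p - 1 - i) :=
          mul_le_mul_of_nonneg_left h2 (mul_pos (by linarith) hc).le
      _ = -p * (c * (y + i) ^ (p - 1 - i)) := by ring
      _ ≤ -p * ((-1) ^ i * rdif i (fun y => y ^ (p - 1)) y) :=
          mul_le_mul_of_nonneg_left h1 (by linarith)
      _ = _ := by ring

lemma rdif_half_lower (i : ℕ) : ∃ c > (0 : ℝ), ∀ x > (0 : ℝ),
    c * (x + (i + 1)) ^ (-(1 / 2 : ℝ) - i) ≤ (-1) ^ i * rdif (i + 1) (fun y => y ^ (1 / 2 : ℝ)) x := by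
  obtain ⟨c, hc, h⟩ := rdif_lower i (-(1 / 2)) (by norm_num)
  refine ⟨1 / 2 * c, by positivity, fun x hx => ?_⟩
  obtain ⟨y, hxy, hyx, e⟩ := rdif_mvt (1 / 2) i x hx
  rw [e]
  have h1 := h y (by linarith)
  rw [show (1 / 2 : ℝ) - 1 = -(1 / 2) by norm_num]
  have hi : (0 : ℝ) ≤ i := by positivity
  have h2 : (x + (i + 1)) ^ (-(1 / 2 : ℝ) - i) ≤ (y + i) ^ (-(1 / 2 : ℝ) - i) := by
    apply Real.rpow_le_rpow_of_nonpos (by linarith)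
    · linarith
    · linarith
  have h3 := mul_le_mul_of_nonneg_left h2 hc.le
  linarith

lemma dif_sqrt (m : ℤ) (i : ℕ) (n : ℤ) :
    dif i (fun k => Real.pi * m * √((k : ℝ) + 1)) n =
      Real.pi * m * rdif i (fun y => y ^ (1 / 2 : ℝ)) ((n : ℝ) + 1) := by
  induction i generalizing n with
  | zero => simp only [dif, rdif, Real.sqrt_eq_rpow]
  | succ i ih => simp only [dif, rdif, ih]; push_cast; ring

lemma exists_min (u : ℕ → ℝ) (hu : ∀ i, 0 < u i) (r : ℕ) : ∃ c > (0 : ℝ), ∀ i ≤ r, c ≤ u i := by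
  induction r with
  | zero => exact ⟨u 0, hu 0, fun i hi => by rw [Nat.le_zero.1 hi]⟩
  | succ r ih =>
    obtain ⟨c, hc, h⟩ := ih
    refine ⟨min c (u (r + 1)), lt_min hc (hu _), fun i hi => ?_⟩
    rcases Nat.lt_or_ge i (r + 1) with h1 | h1
    · exact (min_le_left _ _).trans (h i (by omega))
    · rw [show i = r + 1 by omega]; exact min_le_right _ _

lemma adm_sqrt (m : ℤ) (hm : m ≠ 0) (r : ℕ) : ∃ c > (0 : ℝ), ∃ σ : ℝ, ∃ n0 : ℕ,
    ∀ N : ℕ, ∀ A B : ℤ, (n0 : ℤ) ≤ A → B ≤ N →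
      Adm N r c σ A B (fun k => Real.pi * m * √((k : ℝ) + 1)) := by
  choose u hu hlow using rdif_half_lower
  obtain ⟨c, hc, hmin⟩ := exists_min u hu r
  obtain ⟨n0, hn0⟩ := exists_nat_ge ((Real.pi * |(m : ℝ)|) ^ 2)
  have hpi := Real.pi_gt_three
  have hm1 : (1 : ℝ) ≤ |(m : ℝ)| := by
    have := Int.one_le_abs hm
    exact_mod_cast this
  obtain ⟨σ, hσ, hσm⟩ : ∃ σ : ℝ, (σ = 1 ∨ σ = -1) ∧ σ * m = |(m : ℝ)| := by
    rcases le_total 0 (m : ℝ) with h | h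
    · exact ⟨1, Or.inl rfl, by rw [abs_of_nonneg h, one_mul]⟩
    · exact ⟨-1, Or.inr rfl, by rw [abs_of_nonpos h]; ring⟩
  refine ⟨c, hc, σ, n0, ?_⟩
  intro N A B hA hB
  refine ⟨hσ, ?_, ?_⟩
  · intro i hi n hAn hnB
    rw [dif_sqrt]
    have hn : (0 : ℝ) ≤ n := by exact_mod_cast (by omega : 0 ≤ n)
    have h1 := hlow i ((n : ℝ) + 1) (by linarith)
    have hN : (n : ℝ) + 1 + (i + 1) ≤ N := by exact_mod_cast (by omega : n + 1 + (i + 1) ≤ N)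
    have hi0 : (0 : ℝ) ≤ i := by positivity
    have hNpos : (0 : ℝ) < N := by linarith
    have h2 : (N : ℝ) ^ (-(1 / 2 : ℝ) - i) ≤ ((n : ℝ) + 1 + (i + 1)) ^ (-(1 / 2 : ℝ) - i) :=
      Real.rpow_le_rpow_of_nonpos (by linarith) hN (by linarith)
    have h3 : c / (√N * (N : ℝ) ^ i) = c * (N : ℝ) ^ (-(1 / 2 : ℝ) - i) := by
      rw [Real.rpow_sub hNpos, Real.rpow_neg hNpos.le, ← Real.sqrt_eq_rpow, Real.rpow_natCast]
      field_simp
    have h4 : c * (N : ℝ) ^ (-(1 / 2 : ℝ) - i) ≤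
        (-1) ^ i * rdif (i + 1) (fun y => y ^ (1 / 2 : ℝ)) ((n : ℝ) + 1) :=
      (mul_le_mul (hmin i hi) h2 (by positivity) (hu i).le).trans h1
    have h5 : 0 ≤ c * (N : ℝ) ^ (-(1 / 2 : ℝ) - i) := by positivity
    rw [h3]
    calc _ ≤ (-1) ^ i * rdif (i + 1) (fun y => y ^ (1 / 2 : ℝ)) ((n : ℝ) + 1) := h4
      _ ≤ (Real.pi * |(m : ℝ)|) *
          ((-1) ^ i * rdif (i + 1) (fun y => y ^ (1 / 2 : ℝ)) ((n : ℝ) + 1)) :=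
          le_mul_of_one_le_left (h5.trans h4) (by nlinarith)
      _ = _ := by rw [← hσm]; ring
  · intro n hAn hnB
    have hn : (n0 : ℝ) ≤ n := by exact_mod_cast (by omega : (n0 : ℤ) ≤ n)
    have hn' : (0 : ℝ) ≤ n := le_trans (by positivity) hn
    simp only [dif]
    push_cast
    rw [← mul_sub, abs_mul, abs_mul, abs_of_pos Real.pi_pos]
    set P := Real.pi * |(m : ℝ)|
    have hP : 0 ≤ P := by positivity
    have hs : P ≤ √((n : ℝ) + 1) := Real.le_sqrt_of_sq_le (by linarith)
    have h1 : √((n : ℝ) + 1) ^ 2 = n + 1 := Real.sq_sqrt (by linarith)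
    have h2 : √((n : ℝ) + 1 + 1) ^ 2 = n + 1 + 1 := Real.sq_sqrt (by linarith)
    have h3 : √((n : ℝ) + 1) ≤ √((n : ℝ) + 1 + 1) := Real.sqrt_le_sqrt (by linarith)
    rw [abs_of_nonneg (by linarith)]
    have h4 : 0 ≤ √((n : ℝ) + 1) := Real.sqrt_nonneg _
    nlinarith

/-- sequences with vanishing Gowers norms -/
def GSmall (s : ℕ) (f : ℕ → ℕ → ℂ) : Prop :=
  ∀ ε > (0 : ℝ), ∃ N0 : ℕ, ∀ N ≥ N0, ∀ [NeZero N], gpow N s (fun x => f N x.val) ≤ ε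

lemma GSmall.add {s : ℕ} {f g : ℕ → ℕ → ℂ} (hf : GSmall s f) (hg : GSmall s g) :
    GSmall s (fun N n => f N n + g N n) := by
  intro ε hε
  have hq := qc_pos s
  obtain ⟨N1, h1⟩ := hf (ε / (2 * qc s)) (by positivity)
  obtain ⟨N2, h2⟩ := hg (ε / (2 * qc s)) (by positivity)
  refine ⟨max N1 N2, ?_⟩
  intro N hN _
  have a1 := h1 N (le_trans (le_max_left _ _) hN)
  have a2 := h2 N (le_trans (le_max_right _ _) hN)
  refine (gpow_add_le s (fun x : ZMod N => f N x.val) (fun x : ZMod N => g N x.val)).trans ?_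
  calc _ ≤ qc s * (ε / (2 * qc s) + ε / (2 * qc s)) :=
        mul_le_mul_of_nonneg_left (add_le_add a1 a2) hq.le
    _ = ε := by field_simp; ring

lemma GSmall.smul {s : ℕ} {f : ℕ → ℕ → ℂ} (hf : GSmall s f) (c : ℂ) :
    GSmall s (fun N n => c * f N n) := by
  intro ε hε
  set C := ‖c‖ ^ (2 ^ (s + 1)) with hC
  have hC0 : 0 ≤ C := by positivity
  obtain ⟨N1, h1⟩ := hf (ε / (C + 1)) (by positivity)
  refine ⟨N1, ?_⟩
  intro N hN _
  have a1 := h1 N hN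
  rw [gpow_smul s c (fun x : ZMod N => f N x.val), ← hC]
  calc _ ≤ C * (ε / (C + 1)) := mul_le_mul_of_nonneg_left a1 hC0
    _ ≤ ε := by
      rw [mul_div_assoc', div_le_iff₀ (by positivity)]
      nlinarith

lemma GSmall.zero (s : ℕ) : GSmall s (fun _ _ => 0) := by
  intro ε hε
  refine ⟨0, ?_⟩
  intro N _ _
  rw [gpow_zero_fun]
  exact hε.le

lemma GSmall.approx {s : ℕ} {f : ℕ → ℕ → ℂ} (B : ℝ) (hB : 1 ≤ B)
    (h : ∀ η > (0 : ℝ), η ≤ 1 → ∃ f' : ℕ → ℕ → ℂ, GSmall s f' ∧ ∃ N0 : ℕ, ∀ N ≥ N0,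
      (∀ n < N, ‖f N n - f' N n‖ ≤ B) ∧ ∑ n ∈ Finset.range N, ‖f N n - f' N n‖ ≤ η * N) :
    GSmall s f := by
  intro ε hε
  have hq := qc_pos s
  set C := B ^ (2 ^ (s + 1)) with hC
  have hC0 : 0 < C := by positivity
  obtain ⟨f', hf', N1, h1⟩ := h (min 1 (ε / (2 * qc s * C))) (by positivity) (min_le_left _ _)
  obtain ⟨N2, h2⟩ := hf' (ε / (2 * qc s)) (by positivity)
  refine ⟨max N1 N2, ?_⟩
  intro N hN _
  have hNp : (0 : ℝ) < N := cast_card_pos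
  have a2 := h2 N (le_trans (le_max_right _ _) hN)
  obtain ⟨b1, b2⟩ := h1 N (le_trans (le_max_left _ _) hN)
  have e : (fun x : ZMod N => f N x.val) =
      fun x => f' N x.val + (f N x.val - f' N x.val) := by funext x; ring
  rw [e]
  refine (gpow_add_le s (fun x : ZMod N => f' N x.val)
    (fun x : ZMod N => f N x.val - f' N x.val)).trans ?_
  have a3 := gpow_le_L1_of_bdd s (fun x : ZMod N => f N x.val - f' N x.val) B hB
    (fun x => b1 _ (ZMod.val_lt x))
  rw [sum_val (N := N) (M := ℝ) (fun n => ‖f N n - f' N n‖), ← hC] at a3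
  have a4 : (N : ℝ)⁻¹ * ∑ n ∈ Finset.range N, ‖f N n - f' N n‖ ≤ ε / (2 * qc s * C) := by
    rw [inv_mul_le_iff₀ hNp]
    refine b2.trans ?_
    rw [mul_comm]
    exact mul_le_mul_of_nonneg_left (min_le_right _ _) hNp.le
  have a5 := a3.trans (mul_le_mul_of_nonneg_left a4 hC0.le)
  calc _ ≤ qc s * (ε / (2 * qc s) + C * (ε / (2 * qc s * C))) :=
        mul_le_mul_of_nonneg_left (add_le_add a2 a5) hq.le
    _ = ε := by field_simp; ring

instance fact_two_pos : Fact (0 < (2 : ℝ)) := ⟨two_pos⟩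

/-- admissible sequences of intervals -/
structure Ints (A B : ℕ → ℤ) : Prop where
  nonneg : ∀ N, 0 ≤ A N
  le : ∀ N, B N ≤ N
  short : ∀ N, 2 * (B N - A N) ≤ N + 1
  lim : ∀ n0 : ℕ, ∃ N0 : ℕ, ∀ N ≥ N0, (n0 : ℤ) ≤ A N

/-- antisymmetrised test functions -/
def wf (A B : ℕ → ℤ) (g : C(AddCircle (2 : ℝ), ℂ)) (N n : ℕ) : ℂ :=
  if A N ≤ (n : ℤ) ∧ (n : ℤ) < B N then
    (-1) ^ n * (g ((√((n : ℝ) + 1) : ℝ) : AddCircle (2 : ℝ)) -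
      g ((√((n : ℝ) + 1) + 1 : ℝ) : AddCircle (2 : ℝ))) else 0

lemma small_phase (s : ℕ) {A B : ℕ → ℤ} (I : Ints A B) (m : ℤ) (hm : m ≠ 0) :
    GSmall (s + 1) (fun N n => if A N ≤ (n : ℤ) ∧ (n : ℤ) < B N then
      ex (Real.pi * m * √((n : ℝ) + 1) + Real.pi * n) else 0) := by
  intro ε hε
  obtain ⟨c, hc, σ, n0, h⟩ := adm_sqrt m hm (s + 2)
  obtain ⟨N1, h1⟩ := phase_step s (unifSmall_all s) c hc ε hε
  obtain ⟨N2, h2⟩ := I.lim n0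
  refine ⟨max N1 N2, ?_⟩
  intro N hN _
  have := h1 N (le_trans (le_max_left _ _) hN) (A N) (B N) σ Real.pi _ (I.nonneg N) (I.le N)
    (I.short N) (h N (A N) (B N) (h2 N (le_trans (le_max_right _ _) hN)) (I.le N))
  refine le_trans (le_of_eq ?_) this
  congr 1

lemma ex_pi_nat (n : ℕ) : ex (Real.pi * n) = (-1) ^ n := by
  unfold ex
  push_cast
  rw [show Complex.I * (Real.pi * n) = n * (Real.pi * Complex.I) by ring, Complex.exp_nat_mul,
    Complex.exp_pi_mul_I]

lemma fourier_ex (m : ℤ) (x : ℝ) : fourier m (x : AddCircle (2 : ℝ)) = ex (Real.pi * m * x) := by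
  rw [fourier_coe_apply]
  unfold ex
  congr 1
  push_cast
  ring

lemma small_wf_fourier (s : ℕ) {A B : ℕ → ℤ} (I : Ints A B) (m : ℤ) :
    GSmall (s + 1) (wf A B (fourier m)) := by
  by_cases hm : m = 0
  · subst hm
    have e : wf A B (fourier 0) = fun _ _ => 0 := by
      funext N n; simp [wf]
    rw [e]; exact GSmall.zero _
  · have e : wf A B (fourier m) = fun (N n : ℕ) => (1 - ex (Real.pi * m)) *
        (if A N ≤ (n : ℤ) ∧ (n : ℤ) < B N then
          ex (Real.pi * m * √((n : ℝ) + 1) + Real.pi * n) else 0) := by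
      funext N n
      unfold wf
      split_ifs
      · rw [fourier_ex, fourier_ex, ex_add, ex_pi_nat, mul_add, ex_add, mul_one]
        ring
      · simp
    rw [e]
    exact (small_phase s I m hm).smul _

lemma wf_add (A B : ℕ → ℤ) (g g' : C(AddCircle (2 : ℝ), ℂ)) :
    wf A B (g + g') = fun N n => wf A B g N n + wf A B g' N n := by
  funext N n
  unfold wf
  split_ifs
  · simp only [ContinuousMap.add_apply]; ring
  · simp

lemma wf_smul (A B : ℕ → ℤ) (c : ℂ) (g : C(AddCircle (2 : ℝ), ℂ)) :
    wf A B (c • g) = fun N n => c * wf A B g N n := by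
  funext N n
  unfold wf
  split_ifs
  · simp only [ContinuousMap.smul_apply, smul_eq_mul]; ring
  · simp

lemma norm_wf_le (A B : ℕ → ℤ) (g : C(AddCircle (2 : ℝ), ℂ)) (N n : ℕ) :
    ‖wf A B g N n‖ ≤ 2 * ‖g‖ := by
  unfold wf
  split_ifs
  · rw [norm_mul, norm_pow, norm_neg, norm_one, one_pow, one_mul]
    refine (norm_sub_le _ _).trans ?_
    linarith [g.norm_coe_le_norm ((√((n : ℝ) + 1) : ℝ) : AddCircle (2 : ℝ)),
      g.norm_coe_le_norm ((√((n : ℝ) + 1) + 1 : ℝ) : AddCircle (2 : ℝ))]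
  · simp

lemma small_wf (s : ℕ) {A B : ℕ → ℤ} (I : Ints A B) (g : C(AddCircle (2 : ℝ), ℂ)) :
    GSmall (s + 1) (wf A B g) := by
  have hspan : ∀ p ∈ Submodule.span ℂ (Set.range (@fourier (2 : ℝ))),
      GSmall (s + 1) (wf A B p) := by
    intro p hp
    induction hp using Submodule.span_induction with
    | mem x hx => obtain ⟨m, rfl⟩ := hx; exact small_wf_fourier s I m
    | zero =>
      have e : wf A B 0 = fun _ _ => 0 := by funext N n; simp [wf]
      rw [e]; exact GSmall.zero _
    | add x y _ _ hx hy => rw [wf_add]; exact hx.add hy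
    | smul c x _ hx => rw [wf_smul]; exact hx.smul c
  have hg : g ∈ (Submodule.span ℂ (Set.range (@fourier (2 : ℝ)))).topologicalClosure := by
    rw [span_fourier_closure_eq_top]; trivial
  have hg' : g ∈ closure ((Submodule.span ℂ (Set.range (@fourier (2 : ℝ))) :
    Set C(AddCircle (2 : ℝ), ℂ))) := hg
  rw [Metric.mem_closure_iff] at hg'
  refine GSmall.approx 1 le_rfl ?_
  intro η hη hη1
  obtain ⟨p, hp, hd⟩ := hg' (η / 2) (by positivity)
  refine ⟨wf A B p, hspan p hp, 0, ?_⟩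
  intro N _
  have hb : ∀ n, ‖wf A B g N n - wf A B p N n‖ ≤ η := by
    intro n
    have e : wf A B g N n - wf A B p N n = wf A B (g - p) N n := by
      have := congrFun (congrFun (wf_add A B (g - p) p) N) n
      rw [sub_add_cancel] at this
      rw [this]; ring
    rw [e]
    refine (norm_wf_le A B _ N n).trans ?_
    rw [dist_eq_norm] at hd
    linarith
  refine ⟨fun n _ => (hb n).trans hη1, ?_⟩
  refine (Finset.sum_le_sum fun n _ => hb n).trans ?_
  simp [mul_comm]

/-- continuous approximation of the square wave -/
def clampSin (M : ℝ) : C(AddCircle (2 : ℝ), ℂ) where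
  toFun x := ((max (-1) (min 1 (M * (fourier 1 x).im)) : ℝ) : ℂ)
  continuous_toFun := by fun_prop

lemma norm_clampSin_le (M : ℝ) : ‖clampSin M‖ ≤ 1 := by
  rw [ContinuousMap.norm_le _ zero_le_one]
  intro x
  simp only [clampSin, ContinuousMap.coe_mk]
  rw [Complex.norm_real, Real.norm_eq_abs, abs_le]
  exact ⟨le_max_left _ _, max_le (by norm_num) (min_le_left _ _)⟩

lemma clampSin_eq (δ : ℝ) (hδ : 0 < δ) (k : ℕ) (x : ℝ) (h1 : k + δ ≤ x) (h2 : x ≤ k + 1 - δ) :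
    clampSin δ⁻¹ (x : AddCircle (2 : ℝ)) = (-1) ^ k := by
  have him : (fourier 1 (x : AddCircle (2 : ℝ))).im = (-1) ^ k * Real.sin (Real.pi * (x - k)) := by
    rw [fourier_ex, ex, mul_comm Complex.I, Complex.exp_ofReal_mul_I_im, ← Real.sin_add_nat_mul_pi]
    congr 1
    push_cast
    ring
  have hs : δ ≤ Real.sin (Real.pi * (x - k)) := by
    have hpi := Real.pi_pos
    rcases le_total (x - k) (1 / 2) with h | h
    · have := Real.mul_le_sin (x := Real.pi * (x - k)) (by apply mul_nonneg hpi.le; linarith)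
        (by nlinarith)
      have e : 2 / Real.pi * (Real.pi * (x - k)) = 2 * (x - k) := by field_simp
      linarith
    · have := Real.mul_le_sin (x := Real.pi * (1 - (x - k))) (by apply mul_nonneg hpi.le; linarith)
        (by nlinarith)
      have e : 2 / Real.pi * (Real.pi * (1 - (x - k))) = 2 * (1 - (x - k)) := by field_simp
      have e2 : Real.sin (Real.pi * (1 - (x - k))) = Real.sin (Real.pi * (x - k)) := by
        rw [mul_sub, mul_one, Real.sin_pi_sub]
      linarith
  have hs1 : 1 ≤ δ⁻¹ * Real.sin (Real.pi * (x - k)) := by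
    rw [le_inv_mul_iff₀ hδ]; linarith
  simp only [clampSin, ContinuousMap.coe_mk, him]
  rcases neg_one_pow_eq_or ℝ k with h | h
  · rw [h, one_mul, min_eq_left hs1, max_eq_right (by norm_num)]
    have : ((-1 : ℝ) : ℂ) ^ k = ((1 : ℝ) : ℂ) := by exact_mod_cast congrArg Complex.ofReal h
    rw [← this]; simp
  · rw [h, min_eq_right (by linarith), max_eq_left (by linarith)]
    have : ((-1 : ℝ) : ℂ) ^ k = ((-1 : ℝ) : ℂ) := by exact_mod_cast congrArg Complex.ofReal h
    rw [← this]; simp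

lemma block_count (S : Finset ℕ) (N q : ℕ) (hS : ∀ n ∈ S, n ≤ N)
    (h : ∀ n ∈ S, n < (Nat.sqrt n) ^ 2 + q ∨ (Nat.sqrt n + 1) ^ 2 ≤ n + q) :
    S.card ≤ 2 * q * (Nat.sqrt N + 1) := by
  have h1 := Finset.card_le_mul_card_image (f := Nat.sqrt) S (2 * q) ?_
  · refine h1.trans (Nat.mul_le_mul_left _ ?_)
    have : S.image Nat.sqrt ⊆ Finset.range (Nat.sqrt N + 1) := by
      intro k hk
      obtain ⟨n, hn, rfl⟩ := Finset.mem_image.1 hk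
      rw [Finset.mem_range, Nat.lt_succ_iff]
      exact Nat.sqrt_le_sqrt (hS n hn)
    simpa using Finset.card_le_card this
  · intro k _
    have : S.filter (fun a => Nat.sqrt a = k) ⊆
        Finset.Ico (k ^ 2) (k ^ 2 + q) ∪ Finset.Ico ((k + 1) ^ 2 - q) ((k + 1) ^ 2) := by
      intro n hn
      obtain ⟨hnS, rfl⟩ := Finset.mem_filter.1 hn
      have a1 := Nat.sqrt_le' n
      have a2 := Nat.lt_succ_sqrt' n
      rw [Nat.succ_eq_add_one] at a2
      simp only [Finset.mem_union, Finset.mem_Ico]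
      rcases h n hnS with h | h
      · left; exact ⟨a1, h⟩
      · right; exact ⟨by omega, a2⟩
    have h2 := (Finset.card_le_card this).trans (Finset.card_union_le _ _)
    rw [Nat.card_Ico, Nat.card_Ico] at h2
    omega

/-- the separating sequence -/
def bseq (n : ℕ) : ℂ := (-1) ^ (n + Nat.sqrt n)

lemma bseq_eq (n k : ℕ) (h1 : k ^ 2 ≤ n) (h2 : n < (k + 1) ^ 2) : bseq n = (-1) ^ (n + k) := by
  unfold bseq
  rw [← (Nat.eq_sqrt'.2 ⟨h1, h2⟩ : k = Nat.sqrt n)]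

lemma bseq_norm (n : ℕ) : ‖bseq n‖ = 1 := by
  unfold bseq; simp

def A1 (N : ℕ) : ℤ := (Nat.sqrt N : ℤ)
def B1 (N : ℕ) : ℤ := ((N / 2 : ℕ) : ℤ)

lemma sqrt_large (n0 N : ℕ) (h : n0 ^ 2 ≤ N) : n0 ≤ Nat.sqrt N := Nat.le_sqrt'.2 h

lemma ints1 : Ints A1 B1 := by
  refine ⟨fun N => by unfold A1; positivity, fun N => ?_, fun N => ?_, fun n0 => ⟨n0 ^ 2, ?_⟩⟩
  · unfold B1; omega
  · unfold A1 B1; omega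
  · intro N hN
    unfold A1
    exact_mod_cast sqrt_large n0 N hN

lemma ints2 : Ints B1 (fun N => (N : ℤ)) := by
  refine ⟨fun N => by unfold B1; positivity, fun N => le_rfl, fun N => ?_, fun n0 => ⟨2 * n0, ?_⟩⟩
  · unfold B1; omega
  · intro N hN
    unfold B1
    omega

lemma good_err (δ : ℝ) (hδ : 0 < δ) (N n : ℕ) (hn : n < N) (hnN : Nat.sqrt N ≤ n)
    (h1 : (Nat.sqrt (n + 1) : ℝ) + δ ≤ √((n : ℝ) + 1))
    (h2 : √((n : ℝ) + 1) ≤ Nat.sqrt (n + 1) + 1 - δ) :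
    bseq (n + 1) = -(1 / 2) * (wf A1 B1 (clampSin δ⁻¹) N n
      + wf B1 (fun N => (N : ℤ)) (clampSin δ⁻¹) N n) := by
  have e1 := clampSin_eq δ hδ (Nat.sqrt (n + 1)) _ h1 h2
  have e2 := clampSin_eq δ hδ (Nat.sqrt (n + 1) + 1) (√((n : ℝ) + 1) + 1)
    (by push_cast; linarith) (by push_cast; linarith)
  have e : (-1 : ℂ) ^ n * (clampSin δ⁻¹ ((√((n : ℝ) + 1) : ℝ) : AddCircle (2 : ℝ)) -
      clampSin δ⁻¹ ((√((n : ℝ) + 1) + 1 : ℝ) : AddCircle (2 : ℝ))) = -2 * bseq (n + 1) := by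
    rw [e1, e2, bseq]; ring
  unfold wf
  rw [e]
  have hs : A1 N ≤ (n : ℤ) := by unfold A1; exact_mod_cast hnN
  have hnN' : (n : ℤ) < N := by exact_mod_cast hn
  by_cases hc : (n : ℤ) < B1 N
  · rw [if_pos ⟨hs, hc⟩, if_neg (by omega)]; ring
  · rw [if_neg (by omega), if_pos ⟨by omega, hnN'⟩]; ring

lemma norm_err_le (δ : ℝ) (N n : ℕ) :
    ‖bseq (n + 1) - -(1 / 2) * (wf A1 B1 (clampSin δ⁻¹) N n
      + wf B1 (fun N => (N : ℤ)) (clampSin δ⁻¹) N n)‖ ≤ 3 := by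
  have h1 := norm_wf_le A1 B1 (clampSin δ⁻¹) N n
  have h2 := norm_wf_le B1 (fun N => (N : ℤ)) (clampSin δ⁻¹) N n
  have h3 := norm_clampSin_le δ⁻¹
  refine (norm_sub_le _ _).trans ?_
  rw [bseq_norm, norm_mul, norm_neg]
  have h4 := norm_add_le (wf A1 B1 (clampSin δ⁻¹) N n)
    (wf B1 (fun N => (N : ℤ)) (clampSin δ⁻¹) N n)
  have h5 : ‖(1 / 2 : ℂ)‖ = 1 / 2 := by norm_num
  rw [h5]
  linarith

lemma bad_card (δ : ℝ) (hδ : 0 < δ) (hδ1 : δ ≤ 1) (N : ℕ) :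
    (((Finset.range N).filter (fun n => ¬ ((Nat.sqrt (n + 1) : ℝ) + δ ≤ √((n : ℝ) + 1) ∧
      √((n : ℝ) + 1) ≤ Nat.sqrt (n + 1) + 1 - δ))).card : ℝ) ≤
      4 * δ * (Nat.sqrt N + 1) ^ 2 + 4 * (Nat.sqrt N + 1) := by
  set T := (Finset.range N).filter (fun n => ¬ ((Nat.sqrt (n + 1) : ℝ) + δ ≤ √((n : ℝ) + 1) ∧
      √((n : ℝ) + 1) ≤ Nat.sqrt (n + 1) + 1 - δ)) with hT
  set K := Nat.sqrt N with hK
  set q := ⌈2 * δ * (K + 1)⌉₊ + 1 with hq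
  have hq1 : 2 * δ * (K + 1) + 1 ≤ q := by
    rw [hq]; push_cast; linarith [Nat.le_ceil (2 * δ * ((K : ℝ) + 1))]
  have hq2 : (q : ℝ) ≤ 2 * δ * (K + 1) + 2 := by
    rw [hq]; push_cast
    linarith [Nat.ceil_lt_add_one (a := 2 * δ * ((K : ℝ) + 1)) (by positivity)]
  have hc : (T.image (fun n => n + 1)).card = T.card :=
    Finset.card_image_of_injective _ (add_left_injective 1)
  have h1 := block_count (T.image (fun n => n + 1)) N q ?_ ?_
  · rw [hc, ← hK] at h1
    have h2 : (T.card : ℝ) ≤ 2 * q * (K + 1) := by exact_mod_cast h1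
    refine h2.trans ?_
    have hK0 : (0 : ℝ) ≤ K := by positivity
    nlinarith
  · intro m hm
    obtain ⟨n, hn, rfl⟩ := Finset.mem_image.1 hm
    have := Finset.mem_range.1 (Finset.mem_filter.1 hn).1
    omega
  · intro m hm
    obtain ⟨n, hn, rfl⟩ := Finset.mem_image.1 hm
    obtain ⟨hn1, hn2⟩ := Finset.mem_filter.1 hn
    have hnN := Finset.mem_range.1 hn1
    set k := Nat.sqrt (n + 1) with hk
    have hkK : k ≤ K := Nat.sqrt_le_sqrt (by omega)
    have hkK' : (k : ℝ) ≤ K := by exact_mod_cast hkK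
    have hk0 : (0 : ℝ) ≤ k := by positivity
    have hsq : √((n : ℝ) + 1) ^ 2 = n + 1 := Real.sq_sqrt (by positivity)
    have hs0 := Real.sqrt_nonneg ((n : ℝ) + 1)
    rw [not_and_or, not_le, not_le] at hn2
    have hdk : δ * k ≤ δ * K := mul_le_mul_of_nonneg_left hkK' hδ.le
    rcases hn2 with h | h
    · left
      have : (n : ℝ) + 1 < k ^ 2 + q := by nlinarith
      exact_mod_cast this
    · right
      have hh : (k + 1 - δ) ^ 2 ≤ √((n : ℝ) + 1) ^ 2 :=
        pow_le_pow_left₀ (by linarith) h.le 2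
      have : ((k : ℝ) + 1) ^ 2 ≤ (n + 1) + q := by nlinarith
      exact_mod_cast this

lemma small_bseq (s : ℕ) : GSmall (s + 1) (fun _ n => bseq (n + 1)) := by
  classical
  refine GSmall.approx 3 (by norm_num) ?_
  intro η hη hη1
  set δ := η / 96 with hδ
  have hδ0 : 0 < δ := by positivity
  refine ⟨fun N n => -(1 / 2) * (wf A1 B1 (clampSin δ⁻¹) N n
      + wf B1 (fun N => (N : ℤ)) (clampSin δ⁻¹) N n),
    ((small_wf s ints1 _).add (small_wf s ints2 _)).smul _, ?_⟩
  obtain ⟨n1, hn1⟩ := exists_nat_ge (54 / η)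
  refine ⟨(max 1 n1) ^ 2, ?_⟩
  intro N hN
  refine ⟨fun n _ => norm_err_le δ N n, ?_⟩
  set K := Nat.sqrt N with hK
  have hK1 : max 1 n1 ≤ K := sqrt_large _ _ hN
  have hK2 : (1 : ℝ) ≤ K := by exact_mod_cast (le_max_left 1 n1).trans hK1
  have hK3 : (n1 : ℝ) ≤ K := by exact_mod_cast (le_max_right 1 n1).trans hK1
  have hKN : (K : ℝ) ^ 2 ≤ N := by exact_mod_cast Nat.sqrt_le' N
  set T := (Finset.range N).filter (fun n => ¬ ((Nat.sqrt (n + 1) : ℝ) + δ ≤ √((n : ℝ) + 1) ∧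
      √((n : ℝ) + 1) ≤ Nat.sqrt (n + 1) + 1 - δ)) with hT
  have hTc : (T.card : ℝ) ≤ 4 * δ * (K + 1) ^ 2 + 4 * (K + 1) :=
    bad_card δ hδ0 (by linarith) N
  have hpt : ∀ n ∈ Finset.range N, ‖bseq (n + 1) - -(1 / 2) * (wf A1 B1 (clampSin δ⁻¹) N n
      + wf B1 (fun N => (N : ℤ)) (clampSin δ⁻¹) N n)‖ ≤
      if n ∈ T ∪ Finset.range K then 3 else 0 := by
    intro n hn
    split_ifs with h
    · exact norm_err_le δ N n
    · rw [Finset.mem_union, not_or] at h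
      obtain ⟨h1, h2⟩ := h
      have hKn : K ≤ n := by simpa using h2
      have h3 : (Nat.sqrt (n + 1) : ℝ) + δ ≤ √((n : ℝ) + 1) ∧
          √((n : ℝ) + 1) ≤ Nat.sqrt (n + 1) + 1 - δ := by
        by_contra hcon
        exact h1 (Finset.mem_filter.2 ⟨hn, hcon⟩)
      rw [← good_err δ hδ0 N n (Finset.mem_range.1 hn) hKn h3.1 h3.2]
      simp
  refine (Finset.sum_le_sum hpt).trans ?_
  rw [← Finset.sum_filter, Finset.sum_const, nsmul_eq_mul]
  have hcard : ((Finset.range N).filter (fun n => n ∈ T ∪ Finset.range K)).card ≤ T.card + K := by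
    refine (Finset.card_le_card (t := T ∪ Finset.range K) ?_).trans ?_
    · intro n hn; exact (Finset.mem_filter.1 hn).2
    · simpa using Finset.card_union_le T (Finset.range K)
  have hcard' : (((Finset.range N).filter (fun n => n ∈ T ∪ Finset.range K)).card : ℝ) ≤
      T.card + K := by exact_mod_cast hcard
  have hηK : 54 ≤ η * K := by
    have := hn1.trans hK3
    rw [div_le_iff₀ hη] at this
    linarith
  have hK4 : ((K : ℝ) + 1) ^ 2 ≤ 4 * N := by nlinarith
  have h5 : 4 * δ * ((K : ℝ) + 1) ^ 2 ≤ 4 * δ * (4 * N) :=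
    mul_le_mul_of_nonneg_left hK4 (by positivity)
  have h6 : 54 * (K : ℝ) ≤ η * N := by
    calc 54 * (K : ℝ) ≤ η * K * K := mul_le_mul_of_nonneg_right hηK (by linarith)
      _ = η * K ^ 2 := by ring
      _ ≤ η * N := mul_le_mul_of_nonneg_left hKN hη.le
  have h7 : δ * N = η * N / 96 := by rw [hδ]; ring
  linarith

lemma small_bseq_all (s : ℕ) : GSmall s (fun _ n => bseq (n + 1)) := by
  cases s with
  | succ s => exact small_bseq s
  | zero =>
    intro ε hε
    obtain ⟨N0, h⟩ := small_bseq 0 (ε ^ 2) (by positivity)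
    refine ⟨N0, ?_⟩
    intro N hN _
    have h1 := h N hN
    have h2 := gpow_zero_sq_le (fun x : ZMod N => bseq (x.val + 1))
    exact le_of_pow_le_pow_left₀ two_ne_zero hε.le (h2.trans h1)

lemma tendsto_gowers (s : ℕ) :
    Tendsto (fun N : ℕ => gowersNorm N (s + 1) (fun n => bseq (n + 1))) atTop (𝓝 0) := by
  rw [Metric.tendsto_atTop]
  intro ε hε
  obtain ⟨N0, h⟩ := small_bseq_all s ((ε / 2) ^ (2 ^ (s + 1))) (by positivity)
  refine ⟨N0 + 1, fun N hN => ?_⟩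
  haveI : NeZero N := ⟨by omega⟩
  have h1 := h N (by omega)
  rw [← gowersNorm_pow s (fun n => bseq (n + 1))] at h1
  have h2 := le_of_pow_le_pow_left₀ (by positivity) (by positivity) h1
  rw [Real.dist_eq, sub_zero, abs_of_nonneg (gowersNorm_nonneg _ _ _)]
  linarith

lemma bseq_prod (n h₁ h₂ : ℕ) (h : n + (h₁ + h₂) < (Nat.sqrt n + 1) ^ 2) :
    bseq (n + h₁ + h₂) * bseq (n + h₁) * bseq (n + h₂) * bseq n = 1 := by
  have hk := Nat.sqrt_le' n
  rw [bseq_eq (n + h₁ + h₂) (Nat.sqrt n) (by omega) (by omega),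
    bseq_eq (n + h₁) (Nat.sqrt n) (by omega) (by omega),
    bseq_eq (n + h₂) (Nat.sqrt n) (by omega) (by omega),
    bseq_eq n (Nat.sqrt n) (by omega) (by omega), ← pow_add, ← pow_add, ← pow_add]
  apply Even.neg_one_pow
  exact ⟨2 * n + h₁ + h₂ + 2 * Nat.sqrt n, by ring⟩

lemma tendsto_local (h₁ h₂ : ℕ) : Tendsto (fun N : ℕ => (N : ℂ)⁻¹ * ∑ n ∈ Finset.Icc 1 N,
    bseq (n + h₁ + h₂) * bseq (n + h₁) * bseq (n + h₂) * bseq n) atTop (𝓝 1) := by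
  classical
  rw [Metric.tendsto_atTop]
  intro ε hε
  obtain ⟨n1, hn1⟩ := exists_nat_gt (8 * ((h₁ + h₂ : ℕ) : ℝ) / ε)
  refine ⟨(max 1 n1) ^ 2, fun N hN => ?_⟩
  set q := h₁ + h₂ with hq
  set K := Nat.sqrt N with hK
  have hK1 : max 1 n1 ≤ K := sqrt_large _ _ hN
  have hK2 : (1 : ℝ) ≤ K := by exact_mod_cast (le_max_left 1 n1).trans hK1
  have hK3 : (n1 : ℝ) ≤ K := by exact_mod_cast (le_max_right 1 n1).trans hK1
  have hKN : (K : ℝ) ^ 2 ≤ N := by exact_mod_cast Nat.sqrt_le' N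
  have hNpos : (0 : ℝ) < N := by nlinarith
  have hNne : (N : ℂ) ≠ 0 := by exact_mod_cast hNpos.ne'
  set u : ℕ → ℂ := fun n => bseq (n + h₁ + h₂) * bseq (n + h₁) * bseq (n + h₂) * bseq n with hu
  have e : (N : ℂ)⁻¹ * ∑ n ∈ Finset.Icc 1 N, u n - 1 =
      (N : ℂ)⁻¹ * ∑ n ∈ Finset.Icc 1 N, (u n - 1) := by
    rw [Finset.sum_sub_distrib, mul_sub]
    simp [hNne]
  set T := (Finset.Icc 1 N).filter (fun n => (Nat.sqrt n + 1) ^ 2 ≤ n + q) with hT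
  have hTc : T.card ≤ 2 * q * (K + 1) := by
    apply block_count T N q
    · intro n hn; exact (Finset.mem_Icc.1 (Finset.mem_filter.1 hn).1).2
    · intro n hn; right; exact (Finset.mem_filter.1 hn).2
  have hTc' : (T.card : ℝ) ≤ 2 * q * (K + 1) := by exact_mod_cast hTc
  have hpt : ∀ n ∈ Finset.Icc 1 N, ‖u n - 1‖ ≤
      if (Nat.sqrt n + 1) ^ 2 ≤ n + q then 2 else 0 := by
    intro n _
    split_ifs with h
    · refine (norm_sub_le _ _).trans ?_
      simp only [hu, norm_mul, bseq_norm, norm_one]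
      norm_num
    · rw [hu]
      simp only
      rw [bseq_prod n h₁ h₂ (by omega)]
      simp
  have hsum : ‖∑ n ∈ Finset.Icc 1 N, (u n - 1)‖ ≤ T.card * 2 := by
    refine (norm_sum_le _ _).trans ((Finset.sum_le_sum hpt).trans ?_)
    rw [← Finset.sum_filter, Finset.sum_const, nsmul_eq_mul]
  rw [dist_eq_norm, e, norm_mul, norm_inv, Complex.norm_natCast, inv_mul_lt_iff₀ hNpos]
  have hq0 : (0 : ℝ) ≤ q := by positivity
  have h8 : 8 * (q : ℝ) < ε * K := by
    rw [div_lt_iff₀ hε] at hn1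
    nlinarith
  have h9 : 8 * (q : ℝ) * K < ε * K * K := mul_lt_mul_of_pos_right h8 (by linarith)
  have h10 : ε * (K : ℝ) ^ 2 ≤ ε * N := mul_le_mul_of_nonneg_left hKN hε.le
  nlinarith

end GowersAux

/-- The separating example from the Remark after Theorem 1.7: there is a `±1`-valued
sequence `b`, namely `b(n) = (−1)^{n+k}` for `n ∈ [k², (k+1)²)`, such that the Gowers
norms of the truncations `b·1_{[N]}` (extended periodically to `ℤ_N`) tend to `0` for
every `s ≥ 1`, while the local uniformity seminorm satisfies `‖b‖_{U²(I)} = 1`, i.e.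
`lim_{H₁,H₂} 𝔼_{h₁∈[H₁]} 𝔼_{h₂∈[H₂]} (lim_N 𝔼_{n∈[N]} b(n+h₁+h₂)b(n+h₁)b(n+h₂)b(n)) = 1`.
-/
theorem separating_example_local_vs_gowers :
    ∃ b : ℕ → ℂ,
      (∀ n, b n = 1 ∨ b n = -1) ∧
      (∀ n k : ℕ, k ^ 2 ≤ n → n < (k + 1) ^ 2 → b n = (-1 : ℂ) ^ (n + k)) ∧
      (∀ s : ℕ, 1 ≤ s →
        Tendsto (fun N : ℕ => gowersNorm N s (fun n => b (n + 1))) atTop (𝓝 0)) ∧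
      ∃ c : ℕ → ℕ → ℂ,
        (∀ h₁ h₂ : ℕ, Tendsto (fun N : ℕ => (N : ℂ)⁻¹ * ∑ n ∈ Finset.Icc 1 N,
            b (n + h₁ + h₂) * b (n + h₁) * b (n + h₂) * b n) atTop (𝓝 (c h₁ h₂))) ∧
        Tendsto (fun H : ℕ => ((H : ℂ) ^ 2)⁻¹ *
            ∑ h₁ ∈ Finset.Icc 1 H, ∑ h₂ ∈ Finset.Icc 1 H, c h₁ h₂) atTop (𝓝 1) := by
  refine ⟨bseq, ?_, bseq_eq, ?_, fun _ _ => 1, tendsto_local, ?_⟩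
  · intro n
    exact neg_one_pow_eq_or ℂ _
  · intro s hs
    obtain ⟨t, rfl⟩ := Nat.exists_eq_add_of_le' hs
    exact tendsto_gowers t
  · apply tendsto_const_nhds.congr'
    filter_upwards [eventually_gt_atTop 0] with H hH
    have : (H : ℂ) ≠ 0 := by exact_mod_cast hH.ne'
    simp
    field_simp
end
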